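/- Fix an integer n1 ≥ 1 and an integer n2 ≥ 1, set T = n2 + 2^{2·n1}, and fix ρ ≥ 2. There exists ε* = ε*(ρ) > 0 such that for every ε ∈ (0, ε*), every λ > 0, and every integer m with 1 ≤ m ≤ n2 the following holds. If S is an elastic collision system of 2·n1 + m unit discs in ℝ², labeled as described below, which satisfies (ε,ρ) initial conditions at some time t0, and moreover |DS(t0)| = λ and |Da_m(t0) − λ·w0| ≤ λ·ε, then S undergoes at least m − 1 + n1·(n1+1) collisions in the time interval [t0, t0 + ε·λ⁻¹·T), and S satisfies (ε·(1+2T), ρ·(1+3T)) initial conditions at time t0 + ε·λ⁻¹·T. -/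

import Mathlib

open scoped RealInnerProductSpace

noncomputable section

/-- An elastic collision system of unit balls in `ℝ^d`, indexed by `ι`, on the time
interval `I ⊆ ℝ`.  `x i` is the trajectory of the center of ball `i`, `vr i t` its right
derivative (velocity) at time `t` and `vl i t` its left derivative (which, for a
continuous piecewise linear trajectory, is the left limit of the right derivative).
Fields `right_lin` and `left_lin` say that each trajectory is (locally) linear to the
right and to the left of every time, with the indicated one-sided derivatives; this
encodes continuity and piecewise linearity with locally finitely many breakpoints.
`dist_ge` says the closed unit balls have disjoint interiors, and `collision_rule` is
the elastic collision rule. -/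
structure BallSystem (ι : Type) (d : ℕ) (I : Set ℝ) where
  x : ι → ℝ → EuclideanSpace ℝ (Fin d)
  vr : ι → ℝ → EuclideanSpace ℝ (Fin d)
  vl : ι → ℝ → EuclideanSpace ℝ (Fin d)
  right_lin : ∀ i, ∀ t ∈ I, ∃ ε > 0, ∀ s ∈ Set.Icc t (t + ε) ∩ I,
    x i s = x i t + (s - t) • vr i t
  left_lin : ∀ i, ∀ t ∈ I, ∃ ε > 0, ∀ s ∈ Set.Icc (t - ε) t ∩ I,
    x i s = x i t + (s - t) • vl i t
  dist_ge : ∀ i j, i ≠ j → ∀ t ∈ I, 2 ≤ ‖x i t - x j t‖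
  collision_rule : ∀ i, ∀ t ∈ I, (∃ s ∈ I, s < t) → vr i t ≠ vl i t →
    ∃ j, j ≠ i ∧ ‖x i t - x j t‖ = 2 ∧ vr j t ≠ vl j t ∧
      (∀ k, k ≠ i → ‖x i t - x k t‖ = 2 → k = j) ∧
      (∀ k, k ≠ i → k ≠ j → vr k t = vl k t) ∧
      vr i t = vl i t -
        ⟪vl i t - vl j t, (2⁻¹ : ℝ) • (x i t - x j t)⟫ • ((2⁻¹ : ℝ) • (x i t - x j t)) ∧
      vr j t = vl j t +
        ⟪vl i t - vl j t, (2⁻¹ : ℝ) • (x i t - x j t)⟫ • ((2⁻¹ : ℝ) • (x i t - x j t))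

/-- The set of collisions of the system: pairs `(t, {i,j})` such that at time `t` the
balls `i` and `j` are tangent and both of their velocities change at `t`. -/
def BallSystem.collisions {ι : Type} [DecidableEq ι] {d : ℕ} {I : Set ℝ}
    (S : BallSystem ι d I) : Set (ℝ × Finset ι) :=
  {p | p.1 ∈ I ∧ (∃ s ∈ I, s < p.1) ∧ ∃ i j : ι, i ≠ j ∧ p.2 = {i, j} ∧
    ‖S.x i p.1 - S.x j p.1‖ = 2 ∧ S.vr i p.1 ≠ S.vl i p.1 ∧ S.vr j p.1 ≠ S.vl j p.1}

/-- The Euclidean norm `|DS(t)|` of the concatenated velocity vector of the system. -/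
def BallSystem.speedNorm {ι : Type} [Fintype ι] {d : ℕ} {I : Set ℝ}
    (S : BallSystem ι d I) (t : ℝ) : ℝ :=
  Real.sqrt (∑ i, ‖S.vr i t‖ ^ 2)

/-- `w0 = (0,1)`. -/
def w0 : EuclideanSpace ℝ (Fin 2) := (EuclideanSpace.equiv (Fin 2) ℝ).symm ![0, 1]
/-- `u0 = (1,0)`. -/
def u0 : EuclideanSpace ℝ (Fin 2) := (EuclideanSpace.equiv (Fin 2) ℝ).symm ![1, 0]
/-- `w1 = (-√3/2, 1/2)`. -/
def w1 : EuclideanSpace ℝ (Fin 2) :=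
  (EuclideanSpace.equiv (Fin 2) ℝ).symm ![-(Real.sqrt 3 / 2), 1 / 2]
/-- `w2 = (√3/2, 1/2)`. -/
def w2 : EuclideanSpace ℝ (Fin 2) :=
  (EuclideanSpace.equiv (Fin 2) ℝ).symm ![Real.sqrt 3 / 2, 1 / 2]
/-- `u1 = (1/2, √3/2)`. -/
def u1 : EuclideanSpace ℝ (Fin 2) :=
  (EuclideanSpace.equiv (Fin 2) ℝ).symm ![1 / 2, Real.sqrt 3 / 2]
/-- `u2 = (-1/2, √3/2)`. -/
def u2 : EuclideanSpace ℝ (Fin 2) :=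
  (EuclideanSpace.equiv (Fin 2) ℝ).symm ![-(1 / 2), Real.sqrt 3 / 2]

/-- Index type for the `2·n1 + m` discs `A_m,…,A_1,B_1,…,B_{n1},C_1,…,C_{n1}`:
`Sum.inl k` is the disc `A_{k+1}` (so `Sum.inl 0` is `A_1`), `Sum.inr (Sum.inl j)` is
`B_{j+1}` and `Sum.inr (Sum.inr j)` is `C_{j+1}`. -/
abbrev BBIndex (m n1 : ℕ) : Type := Fin m ⊕ (Fin n1 ⊕ Fin n1)

/-- The `(ε,ρ)` initial conditions at time `t0` for a system of `2·n1 + m` discs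
labeled `A_m,…,A_1,B_1,…,B_{n1},C_1,…,C_{n1}` (with `b_0 = c_0 = a_1`):
(i) `w1·a_1 ≥ 0`, `w2·a_1 ≥ 0`, `w0·a_1 ≤ ε`;
(ii) `|u0·a_k| ≤ ε` for `k = 2,…,m`, `|u1·b_j| ≤ ε` and `|u2·c_j| ≤ ε` for
`j = 0,…,n1`;
(iii) every gap `Γ^A_k`, `Γ^B_k`, `Γ^C_k` lies in `[ε/ρ, ε]`;
(iv) the ratio of the gaps `Γ^B_1` and `Γ^C_1` (in one order or the other) is `≤ 2/3`. -/
def InitCond (m n1 : ℕ) (hm : 0 < m) (hn1 : 0 < n1)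
    (S : BallSystem (BBIndex m n1) 2 Set.univ) (ε ρ t0 : ℝ) : Prop :=
  let a : Fin m → ℝ → EuclideanSpace ℝ (Fin 2) := fun k => S.x (Sum.inl k)
  let b : Fin n1 → ℝ → EuclideanSpace ℝ (Fin 2) := fun j => S.x (Sum.inr (Sum.inl j))
  let c : Fin n1 → ℝ → EuclideanSpace ℝ (Fin 2) := fun j => S.x (Sum.inr (Sum.inr j))
  -- (i)
  (0 ≤ ⟪w1, a ⟨0, hm⟩ t0⟫ ∧ 0 ≤ ⟪w2, a ⟨0, hm⟩ t0⟫ ∧ ⟪w0, a ⟨0, hm⟩ t0⟫ ≤ ε) ∧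
  -- (ii)
  (∀ k : Fin m, 0 < (k : ℕ) → |⟪u0, a k t0⟫| ≤ ε) ∧
  (|⟪u1, a ⟨0, hm⟩ t0⟫| ≤ ε) ∧ (∀ j : Fin n1, |⟪u1, b j t0⟫| ≤ ε) ∧
  (|⟪u2, a ⟨0, hm⟩ t0⟫| ≤ ε) ∧ (∀ j : Fin n1, |⟪u2, c j t0⟫| ≤ ε) ∧
  -- (iii): gaps `Γ^A_k`, `k = 2,…,m`
  (∀ i : ℕ, ∀ h : i + 1 < m,
    ε * ρ⁻¹ ≤ ⟪w0, a ⟨i, by omega⟩ t0 - a ⟨i + 1, h⟩ t0⟫ - 2 ∧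
      ⟪w0, a ⟨i, by omega⟩ t0 - a ⟨i + 1, h⟩ t0⟫ - 2 ≤ ε) ∧
  -- (iii): gap `Γ^B_1` (recall `b_0 = a_1`)
  (ε * ρ⁻¹ ≤ ⟪w1, b ⟨0, hn1⟩ t0 - a ⟨0, hm⟩ t0⟫ - 2 ∧
    ⟪w1, b ⟨0, hn1⟩ t0 - a ⟨0, hm⟩ t0⟫ - 2 ≤ ε) ∧
  -- (iii): gaps `Γ^B_k`, `k = 2,…,n1`
  (∀ i : ℕ, ∀ h : i + 1 < n1,
    ε * ρ⁻¹ ≤ ⟪w1, b ⟨i + 1, h⟩ t0 - b ⟨i, by omega⟩ t0⟫ - 2 ∧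
      ⟪w1, b ⟨i + 1, h⟩ t0 - b ⟨i, by omega⟩ t0⟫ - 2 ≤ ε) ∧
  -- (iii): gap `Γ^C_1`
  (ε * ρ⁻¹ ≤ ⟪w2, c ⟨0, hn1⟩ t0 - a ⟨0, hm⟩ t0⟫ - 2 ∧
    ⟪w2, c ⟨0, hn1⟩ t0 - a ⟨0, hm⟩ t0⟫ - 2 ≤ ε) ∧
  -- (iii): gaps `Γ^C_k`, `k = 2,…,n1`
  (∀ i : ℕ, ∀ h : i + 1 < n1,
    ε * ρ⁻¹ ≤ ⟪w2, c ⟨i + 1, h⟩ t0 - c ⟨i, by omega⟩ t0⟫ - 2 ∧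
      ⟪w2, c ⟨i + 1, h⟩ t0 - c ⟨i, by omega⟩ t0⟫ - 2 ≤ ε) ∧
  -- (iv)
  ((⟪w1, b ⟨0, hn1⟩ t0 - a ⟨0, hm⟩ t0⟫ - 2) /
      (⟪w2, c ⟨0, hn1⟩ t0 - a ⟨0, hm⟩ t0⟫ - 2) ≤ 2 / 3 ∨
    (⟪w2, c ⟨0, hn1⟩ t0 - a ⟨0, hm⟩ t0⟫ - 2) /
      (⟪w1, b ⟨0, hn1⟩ t0 - a ⟨0, hm⟩ t0⟫ - 2) ≤ 2 / 3)

end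

/-!
To first order in `ε`, only the coordinates of the balls of each row along the direction of that
row matter, measured in units of `ε` from the positions `0, 2, 4, …`.  In these coordinates a
collision of two balls of a row exchanges their velocities.  Hence the pulse of `A_m` is handed down
the train to the apex `A_1`, and each pulse that enters an arm is handed outwards until it reaches
the last ball that is still at rest.

The directions of the arms have inner product `-1/2`.  So when the apex hits an arm, it comes to
rest along this arm and changes its velocity along the other one by half of the velocity it has
lost: it bounces between the arms, and its speed halves with every hit.  The pulses it launches into
an arm become slower and slower, so that no pulse catches up with its predecessor.  Thus each arm is
hit `n` times, the `j`-th pulse causes `n + 1 - j` collisions in its arm, and together with the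
`m - 1` collisions of the train this gives `m - 1 + n * (n + 1)`.  The times between the hits of the
arms grow like powers of `2`, which is the origin of the term `2 ^ (2 * n)` in `T`.

The true motion obeys these laws only up to errors of relative size `ε`.  Free motion preserves a
tolerance that grows linearly in time, and each collision multiplies it at most by a constant.  As
only a bounded number of collisions can occur before time `T`, the error stays small for small `ε`.
-/

/-! ### Approximate motions on a line -/

/-- Reduced coordinates of the balls of one row: positions along the direction of the row and
velocities, as functions of the index of the ball. -/
structure Row where
  pos : ℕ → ℝ
  vel : ℕ → ℝ

namespace Row

/-- The row after free motion during a time `d`. -/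
def move (R : Row) (d : ℝ) : Row where
  pos k := R.pos k + d * R.vel k
  vel := R.vel

/-- Up to the error `e`, ball `k` is at position `c` and has velocity `v` at time `t`.  The
tolerance in the position grows linearly in `t`, so that free motion preserves the error. -/
structure Near (R : Row) (k : ℕ) (e t c v : ℝ) : Prop where
  vel : |R.vel k - v| ≤ e
  pos : |R.pos k - c| ≤ e * (1 + t)

variable {R L : Row} {k n : ℕ} {e e' t t' c c' v κ : ℝ}

lemma Near.mono (H : R.Near k e t c v) (he : e ≤ e') (ht : 0 ≤ t) : R.Near k e' t c v :=
  ⟨H.vel.trans he, H.pos.trans (mul_le_mul_of_nonneg_right he (by linarith))⟩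

lemma Near.congr (H : L.Near k e t c v) (hpos : R.pos = L.pos) (hvel : R.vel k = L.vel k) :
    R.Near k e t c v :=
  ⟨hvel ▸ H.vel, hpos ▸ H.pos⟩

lemma Near.move (H : R.Near k e t c v) (ht : t ≤ t') (hc : c' = c + (t' - t) * v) :
    (R.move (t' - t)).Near k e t' c' v := by
  refine ⟨H.vel, ?_⟩
  have hdrift : |(t' - t) * (R.vel k - v)| ≤ (t' - t) * e := by
    rw [abs_mul, abs_of_nonneg (sub_nonneg.2 ht)]
    exact mul_le_mul_of_nonneg_left H.vel (sub_nonneg.2 ht)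
  calc |R.pos k + (t' - t) * R.vel k - c'|
      = |(R.pos k - c) + (t' - t) * (R.vel k - v)| := by rw [hc]; ring_nf
    _ ≤ e * (1 + t) + (t' - t) * e := (abs_add_le _ _).trans (add_le_add H.pos hdrift)
    _ = e * (1 + t') := by ring

/-- An approximately elastic collision between the balls `k` and `k + 1` of a row with last
index `n`, turning the row `L` into `R`. -/
structure Hit (n : ℕ) (κ : ℝ) (L R : Row) (k : ℕ) : Prop where
  pos : R.pos = L.pos
  contact : |L.pos (k + 1) - L.pos k| ≤ κ
  approach : L.vel (k + 1) - L.vel k ≤ κ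
  outer : |R.vel (k + 1) - L.vel k| ≤ κ
  inner : |R.vel k - L.vel (k + 1)| ≤ κ
  other : ∀ j ≤ n, j ≠ k → j ≠ k + 1 → R.vel j = L.vel j

namespace Hit

lemma nonneg (C : Hit n κ L R k) : 0 ≤ κ := (abs_nonneg _).trans C.contact

lemma near_outer (C : Hit n κ L R k) (H : L.Near k e t c v) (ht : 0 ≤ t) :
    R.Near (k + 1) (e + κ) t c v := by
  have := mul_nonneg C.nonneg ht
  refine ⟨?_, ?_⟩
  · linarith [abs_sub_le (R.vel (k + 1)) (L.vel k) v, C.outer, H.vel]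
  · rw [C.pos]
    linarith [abs_sub_le (L.pos (k + 1)) (L.pos k) c, C.contact, H.pos]

lemma near_inner (C : Hit n κ L R k) (H : L.Near (k + 1) e t c v) (ht : 0 ≤ t) :
    R.Near k (e + κ) t c v := by
  have := mul_nonneg C.nonneg ht
  refine ⟨?_, ?_⟩
  · linarith [abs_sub_le (R.vel k) (L.vel (k + 1)) v, C.inner, H.vel]
  · rw [C.pos]
    have hcontact := C.contact
    rw [abs_sub_comm] at hcontact
    linarith [abs_sub_le (L.pos k) (L.pos (k + 1)) c, hcontact, H.pos]

end Hit

end Row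

/-! ### Pulses in an arm -/

/-- The speed of the `j`-th pulse travelling along the arm `i`, where the arm `lead` is hit
first. -/
noncomputable def pulseSpeed (lead i : Bool) (j : ℕ) : ℝ :=
  if i = lead then (if j = 1 then 1 / 2 else 6 / 4 ^ j) else 3 / 4 ^ j

/-- Speeds of successive pulses that decrease, so that no pulse catches up with its
predecessor. -/
structure PulseProfile (V : ℕ → ℝ) : Prop where
  lower : ∀ j, 1 ≤ j → 2 / 4 ^ j ≤ V j
  gap : ∀ j, 1 ≤ j → 2 / 4 ^ (j + 1) ≤ V j - V (j + 1)

lemma pulseProfile_pulseSpeed (lead i : Bool) : PulseProfile (pulseSpeed lead i) := by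
  constructor <;> intro j hj <;> have hp : (0 : ℝ) < (4 ^ j)⁻¹ := by positivity
  · unfold pulseSpeed
    split_ifs with hi hj1
    · norm_num [hj1]
    all_goals simp only [div_eq_mul_inv]; linarith
  · unfold pulseSpeed
    split_ifs with hi hj1 hj2 hj2
    · omega
    · norm_num [hj1]
    · omega
    all_goals simp only [div_eq_mul_inv, pow_succ, mul_inv]; linarith

namespace PulseProfile

variable {V : ℕ → ℝ} {j n : ℕ}

lemma lower_of_le (hV : PulseProfile V) (hj : 1 ≤ j) (hjn : j ≤ n) : 2 / 4 ^ n ≤ V j :=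
  le_trans (by gcongr; norm_num) (hV.lower j hj)

lemma gap_of_lt (hV : PulseProfile V) (hj : 1 ≤ j) (hjn : j < n) :
    2 / 4 ^ n ≤ V j - V (j + 1) :=
  le_trans (by gcongr; exacts [by norm_num, hjn]) (hV.gap j hj)

end PulseProfile

/-- `g k` counts the collisions between the balls `k` and `k + 1` of an arm of balls `0, …, n`:
consecutive counts differ by at most one, and ball `k + 1` carries a pulse exactly if its two
counts differ. -/
structure PulseCount (n : ℕ) (g : ℕ → ℕ) : Prop where
  bound : ∀ k ≤ n, g k + k ≤ n
  step : ∀ k < n, g (k + 1) ≤ g k ∧ g k ≤ g (k + 1) + 1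

namespace PulseCount

variable {n k : ℕ} {g : ℕ → ℕ}

lemma eq_of_full (H : PulseCount n g) (hfull : g 0 = n) (hk : k ≤ n) : g k = n - k := by
  induction k with
  | zero => exact hfull
  | succ k ih =>
    have := ih (by omega)
    have := H.step k (by omega)
    have := H.bound (k + 1) hk
    omega

lemma eq_zero (H : PulseCount n g) (h0 : g 0 = 0) (hk : k ≤ n) : g k = 0 := by
  induction k with
  | zero => exact h0
  | succ k ih =>
    have := ih (by omega)
    have := H.step k (by omega)
    omega

lemma sum_le (H : PulseCount n g) : ∑ k ∈ Finset.range n, g k ≤ n * n := by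
  simpa using Finset.sum_le_card_nsmul (Finset.range n) g n fun k hk => by
    have := H.bound k (Finset.mem_range.1 hk).le
    omega

lemma sum_of_full (H : PulseCount n g) (hfull : g 0 = n) :
    2 * ∑ k ∈ Finset.range n, g k = n * (n + 1) := by
  have hsum : ∑ k ∈ Finset.range (n + 1), g k = ∑ k ∈ Finset.range (n + 1), k :=
    (Finset.sum_congr rfl fun k hk =>
      H.eq_of_full hfull (Finset.mem_range_succ_iff.1 hk)).trans
      (Finset.sum_range_reflect (fun k => k) (n + 1))
  have hlast := H.eq_of_full hfull le_rfl
  rw [Finset.sum_range_succ, hlast, Nat.sub_self, add_zero] at hsum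
  rw [hsum, mul_comm, Finset.sum_range_id_mul_two, mul_comm, Nat.add_sub_cancel]

lemma update (H : PulseCount n g) (hk : k < n) (hrest : g k = g (k + 1))
    (hprev : k ≠ 0 → g (k - 1) = g k + 1) :
    PulseCount n (Function.update g k (g k + 1)) := by
  have hbound := H.bound (k + 1) hk
  refine ⟨fun j hj => ?_, fun j hj => ?_⟩
  · have := H.bound j hj
    rw [Function.update_apply]
    split_ifs <;> omega
  · have := H.step j hj
    simp only [Function.update_apply]
    split_ifs with h1 h2 h2
    · omega
    · have := hprev (by omega)
      rw [show k - 1 = j by omega] at this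
      omega
    · subst h2
      omega
    · exact this

end PulseCount

/-- The state of an arm of balls `0, …, n` with initial positions `P`: every ball but the apex
`0` either carries the pulse of the last collision below it, or it rests where one of the balls
started. -/
structure Chain (n : ℕ) (P V : ℕ → ℝ) (e t : ℝ) (g : ℕ → ℕ) (R : Row) : Prop
    extends PulseCount n g where
  moving : ∀ k < n, g k = g (k + 1) + 1 → |R.vel (k + 1) - V (g k)| ≤ e
  resting : ∀ k < n, g k = g (k + 1) → R.Near (k + 1) e t (P (k + 1 + g (k + 1))) 0

namespace Chain

variable {n k : ℕ} {P V : ℕ → ℝ} {e e' t t' κ : ℝ} {g : ℕ → ℕ} {R L : Row}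

lemma mono (H : Chain n P V e t g R) (he : e ≤ e') (ht : 0 ≤ t) : Chain n P V e' t g R where
  toPulseCount := H.toPulseCount
  moving k hk hm := (H.moving k hk hm).trans he
  resting k hk hm := (H.resting k hk hm).mono he ht

lemma congr (H : Chain n P V e t g L) (hpos : R.pos = L.pos)
    (hvel : ∀ j, 1 ≤ j → j ≤ n → R.vel j = L.vel j) : Chain n P V e t g R where
  toPulseCount := H.toPulseCount
  moving k hk hm := by rw [hvel _ (by omega) (by omega)]; exact H.moving k hk hm
  resting k hk hm := (H.resting k hk hm).congr hpos (hvel _ (by omega) (by omega))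

lemma move (H : Chain n P V e t g R) (ht : t ≤ t') : Chain n P V e t' g (R.move (t' - t)) where
  toPulseCount := H.toPulseCount
  moving := H.moving
  resting k hk hm := (H.resting k hk hm).move ht (by ring)

lemma of_zero (H : Chain n P V e t g R) (h0 : g 0 = 0) (V' : ℕ → ℝ) : Chain n P V' e t g R where
  toPulseCount := H.toPulseCount
  moving k hk hm := by have := H.eq_zero h0 hk.le; omega
  resting := H.resting

lemma abs_vel_one_sub_le (H : Chain n P V e t g R) (hn : 0 < n) (hfull : g 0 = n) :
    |R.vel 1 - V n| ≤ e := by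
  have h1 : g 1 = n - 1 := H.eq_of_full hfull hn
  simpa [hfull] using H.moving 0 hn (by rw [zero_add]; omega)

/-- The apex lies behind ball `k` as long as all balls below `k` are moving, and the first resting
ball is at the next initial position. -/
lemma apex_le (H : Chain n P V e t g R) (hκ : 0 ≤ κ)
    (hgap : ∀ k < n, -κ ≤ R.pos (k + 1) - R.pos k) (hlt : g 0 < n) :
    R.pos 0 ≤ P (g 0 + 1) + n * κ + e * (1 + t) := by
  have hchain : ∀ k ≤ n, R.pos 0 ≤ R.pos k + k * κ := by
    intro k hk
    induction k with
    | zero => simp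
    | succ k ih =>
      push_cast
      linarith [ih (by omega), hgap k (by omega)]
  obtain ⟨k, hk, hmoving, hrest⟩ : ∃ k < n, g 0 = g k + k ∧ g k = g (k + 1) := by
    by_contra! hne
    have hmoving : ∀ k ≤ n, g 0 = g k + k := by
      intro k hk
      induction k with
      | zero => simp
      | succ k ih =>
        have := ih (by omega)
        have := hne k (by omega) this
        have := H.step k (by omega)
        omega
    have := H.bound n le_rfl
    have := hmoving n le_rfl
    omega
  have hpos := (abs_le.1 (H.resting k hk hrest).pos).2
  rw [show k + 1 + g (k + 1) = g 0 + 1 by omega] at hpos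
  have hκk : ((k + 1 : ℕ) : ℝ) * κ ≤ n * κ :=
    mul_le_mul_of_nonneg_right (by exact_mod_cast hk) hκ
  linarith [hchain (k + 1) hk]

lemma pass (H : Chain n P V e t g L) (hk : k < n) (hrest : g k = g (k + 1))
    (hprev : k ≠ 0 → g (k - 1) = g k + 1) (he : e ≤ e') (ht : 0 ≤ t)
    (hpos : R.pos = L.pos) (hvel : ∀ j ≤ n, j ≠ k → j ≠ k + 1 → R.vel j = L.vel j)
    (houter : |R.vel (k + 1) - V (g k + 1)| ≤ e')
    (hinner : k ≠ 0 → R.Near k e' t (P (k + g k + 1)) 0) :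
    Chain n P V e' t (Function.update g k (g k + 1)) R := by
  refine ⟨H.update hk hrest hprev, fun j hj hm => ?_, fun j hj hm => ?_⟩ <;>
    rcases eq_or_ne j k with rfl | hjk
  · simpa using houter
  · rcases eq_or_ne (j + 1) k with rfl | hjk'
    · have := hprev (by omega)
      simp only [Nat.add_sub_cancel, Function.update_self, Function.update_of_ne hjk] at this hm
      omega
    · rw [Function.update_of_ne hjk] at hm ⊢
      rw [Function.update_of_ne hjk'] at hm
      rw [hvel (j + 1) (by omega) hjk' (by omega)]
      exact (H.moving j hj hm).trans he
  · simp only [Function.update_self, Function.update_of_ne (show j + 1 ≠ j by omega)] at hm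
    omega
  · rcases eq_or_ne (j + 1) k with rfl | hjk'
    · rw [Function.update_self, ← add_assoc]
      exact hinner (by omega)
    · rw [Function.update_of_ne hjk, Function.update_of_ne hjk'] at hm
      rw [Function.update_of_ne hjk']
      exact ((H.resting j hj hm).mono he ht).congr hpos (hvel (j + 1) (by omega) hjk' (by omega))

/-- In a full arm consecutive balls carry consecutive pulses, hence they separate. -/
lemma gap_move (H : Chain n P V e t g R) (hV : PulseProfile V) (ht : t ≤ t') (hfull : g 0 = n)
    {τ : ℝ} (hk : 1 ≤ k) (hkn : k < n)
    (hgap : (t - τ) * (2 / 4 ^ n) - 2 * (e * (1 + t)) ≤ R.pos (k + 1) - R.pos k) :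
    (t' - τ) * (2 / 4 ^ n) - 2 * (e * (1 + t')) ≤
      (R.move (t' - t)).pos (k + 1) - (R.move (t' - t)).pos k := by
  obtain ⟨k, rfl⟩ := Nat.exists_eq_add_of_le' hk
  have g0 := H.eq_of_full hfull (k := k) (by omega)
  have g1 := H.eq_of_full hfull (k := k + 1) (by omega)
  have g2 := H.eq_of_full hfull (k := k + 1 + 1) (by omega)
  have inner := abs_le.1 (H.moving k (by omega) (by omega))
  have outer := abs_le.1 (H.moving (k + 1) (by omega) (by omega))
  rw [show g k = g (k + 1) + 1 by omega] at inner
  have hspeed : 2 / 4 ^ n - 2 * e ≤ R.vel (k + 1 + 1) - R.vel (k + 1) := by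
    linarith [hV.gap_of_lt (j := g (k + 1)) (n := n) (by omega) (by omega), inner.2, outer.1]
  have := mul_le_mul_of_nonneg_left hspeed (sub_nonneg.2 ht)
  simp only [Row.move]
  linarith

end Chain

/-- The error `e` at time `t` is small, and it may grow to `e'` in a collision whose own error
is `κ`. -/
structure Admissible (n : ℕ) (ρ κ e e' t : ℝ) : Prop where
  pos : 0 < n
  two_le : 2 ≤ ρ
  nonneg : 0 ≤ κ
  le : κ ≤ e
  time : 0 ≤ t
  small : 100 * 4 ^ n * (e * (1 + t)) ≤ ρ⁻¹
  large : 100 * 4 ^ n * (e * (1 + t)) ≤ e'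

namespace Admissible

variable {n : ℕ} {ρ κ e e' t : ℝ}

lemma err_nonneg (A : Admissible n ρ κ e e' t) : 0 ≤ e := A.nonneg.trans A.le

lemma le_mul (A : Admissible n ρ κ e e' t) : e ≤ e * (1 + t) :=
  le_mul_of_one_le_right A.err_nonneg (by linarith [A.time])

lemma mul_nonneg (A : Admissible n ρ κ e e' t) : 0 ≤ e * (1 + t) := A.err_nonneg.trans A.le_mul

lemma inv_pos (A : Admissible n ρ κ e e' t) : 0 < ρ⁻¹ := _root_.inv_pos.2 (by linarith [A.two_le])

lemma inv_le (A : Admissible n ρ κ e e' t) : ρ⁻¹ ≤ 1 / 2 := by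
  rw [one_div]
  exact inv_anti₀ (by norm_num) A.two_le

lemma mul_le_pow_mul (A : Admissible n ρ κ e e' t) :
    400 * (e * (1 + t)) ≤ 100 * 4 ^ n * (e * (1 + t)) := by
  have : (4 : ℝ) ≤ 4 ^ n := by
    simpa using pow_le_pow_right₀ (by norm_num : (1 : ℝ) ≤ 4) A.pos
  exact mul_le_mul_of_nonneg_right (by linarith) A.mul_nonneg

lemma mul_lt_inv (A : Admissible n ρ κ e e' t) : 200 * (e * (1 + t)) < ρ⁻¹ := by
  linarith [A.mul_le_pow_mul, A.small, A.inv_pos]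

lemma mul_le_large (A : Admissible n ρ κ e e' t) : 400 * (e * (1 + t)) ≤ e' :=
  A.mul_le_pow_mul.trans A.large

lemma mul_lt_pow (A : Admissible n ρ κ e e' t) : 50 * (e * (1 + t)) < 1 / 2 / 4 ^ n := by
  rw [lt_div_iff₀ (by positivity)]
  linarith [A.small, A.inv_le]

lemma le_large (A : Admissible n ρ κ e e' t) : e ≤ e' := by
  linarith [A.mul_le_large, A.le_mul, A.mul_nonneg]

lemma add_le_large (A : Admissible n ρ κ e e' t) : e + κ ≤ e' := by
  linarith [A.mul_le_large, A.le_mul, A.mul_nonneg, A.le]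

end Admissible

namespace Chain

variable {n k : ℕ} {P V : ℕ → ℝ} {ρ κ e e' t : ℝ} {g : ℕ → ℕ} {L R : Row}

/-- Only a pulse that reaches a resting ball leads to a collision inside an arm. -/
lemma counts_of_hit (H : Chain n P V e t g L) (A : Admissible n ρ κ e e' t)
    (hV : PulseProfile V) (hP : ∀ k < n, ρ⁻¹ ≤ P (k + 1) - P k)
    (C : Row.Hit n κ L R (k + 1)) (hk : k + 1 < n) :
    g (k + 1) = g (k + 1 + 1) ∧ g k = g (k + 1) + 1 := by
  have stepk := H.step k (by omega)
  have stepk' := H.step (k + 1) hk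
  have hbound := H.bound (k + 1 + 1) (by omega)
  have happ := C.approach
  have hpow := A.mul_lt_pow
  have hsplit : (2 : ℝ) / 4 ^ n = 4 * (1 / 2 / 4 ^ n) := by ring
  have hrest : g (k + 1) = g (k + 1 + 1) := by
    by_contra hne
    have outer := (abs_le.1 (H.moving (k + 1) hk (by omega))).1
    rcases Nat.lt_or_ge (g (k + 1)) (g k) with hlt | hge
    · have inner := (abs_le.1 (H.moving k (by omega) (by omega))).2
      have hgap := hV.gap_of_lt (j := g (k + 1)) (n := n) (by omega) (by omega)
      rw [show g k = g (k + 1) + 1 by omega] at inner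
      linarith [A.le_mul, A.le, A.err_nonneg]
    · have inner := (abs_le.1 (H.resting k (by omega) (by omega)).vel).2
      have hlower := hV.lower_of_le (j := g (k + 1)) (n := n) (by omega) (by omega)
      linarith [A.le_mul, A.le, A.err_nonneg]
  refine ⟨hrest, ?_⟩
  by_contra hne
  have inner := (abs_le.1 (H.resting k (by omega) (by omega)).pos).2
  have outer := (abs_le.1 (H.resting (k + 1) hk hrest).pos).1
  have hgap := hP (k + 1 + g (k + 1)) (by omega)
  rw [show k + 1 + 1 + g (k + 1 + 1) = k + 1 + g (k + 1) + 1 by omega] at outer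
  linarith [(abs_le.1 C.contact).2, A.mul_lt_inv, A.le_mul, A.le, A.mul_nonneg]

lemma hit (H : Chain n P V e t g L) (A : Admissible n ρ κ e e' t) (hV : PulseProfile V)
    (hP : ∀ k < n, ρ⁻¹ ≤ P (k + 1) - P k) (C : Row.Hit n κ L R (k + 1)) (hk : k + 1 < n) :
    Chain n P V e' t (Function.update g (k + 1) (g (k + 1) + 1)) R := by
  obtain ⟨hrest, hprev⟩ := H.counts_of_hit A hV hP C hk
  have hmoving := H.moving k (by omega) hprev
  rw [hprev] at hmoving
  have hresting := H.resting (k + 1) hk hrest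
  rw [show k + 1 + 1 + g (k + 1 + 1) = k + 1 + g (k + 1) + 1 by omega] at hresting
  refine H.pass hk hrest (fun _ => hprev) A.le_large A.time C.pos C.other ?_
    fun _ => (C.near_inner hresting A.time).mono A.add_le_large A.time
  linarith [abs_sub_le (R.vel (k + 1 + 1)) (L.vel (k + 1)) (V (g (k + 1) + 1)), C.outer,
    A.add_le_large]

/-- An apex that is not faster than the next pulse cannot catch up with the last one, so it can
only hit a resting ball. -/
lemma resting_of_apex_hit (H : Chain n P V e t g L) (A : Admissible n ρ κ e e' t)
    (hV : PulseProfile V) (hv : g 0 ≠ 0 → L.vel 0 ≤ V (g 0 + 1) + e) (C : Row.Hit n κ L R 0) :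
    g 0 = g 1 ∧ g 0 < n ∧ L.Near 1 e t (P (g 0 + 1)) 0 := by
  have hbound := H.bound 1 A.pos
  have hstep := H.step 0 A.pos
  have happ := C.approach
  rw [zero_add] at hstep happ
  have hrest : g 0 = g 1 := by
    by_contra hne
    have hmoving := (abs_le.1 (H.moving 0 A.pos (by rw [zero_add]; omega))).1
    rw [zero_add] at hmoving
    have hgap := hV.gap_of_lt (j := g 0) (n := n + 1) (by omega)
      (by have := H.bound 0 (by omega); omega)
    have hsplit : (2 : ℝ) / 4 ^ (n + 1) = 1 / 2 / 4 ^ n := by rw [pow_succ]; field_simp; norm_num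
    linarith [hv (by omega), A.le_mul, A.le, A.err_nonneg, A.mul_lt_pow]
  refine ⟨hrest, by omega, ?_⟩
  have hresting := H.resting 0 A.pos hrest
  rwa [zero_add, show 1 + g 1 = g 0 + 1 by omega] at hresting

lemma not_apex_hit_of_resting (H : Chain n P V e t g L) (A : Admissible n ρ κ e e' t)
    (hV : PulseProfile V) (hP : ∀ k < n, ρ⁻¹ ≤ P (k + 1) - P k)
    (hapex : L.Near 0 e t (P (g 0)) 0) : ¬ Row.Hit n κ L R 0 := by
  intro C
  have hv : g 0 ≠ 0 → L.vel 0 ≤ V (g 0 + 1) + e := fun _ => by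
    have : (0 : ℝ) < 2 / 4 ^ (g 0 + 1) := by positivity
    linarith [hV.lower (g 0 + 1) (by omega), (abs_le.1 hapex.vel).2]
  obtain ⟨-, hlt, hone⟩ := H.resting_of_apex_hit A hV hv C
  linarith [hP (g 0) hlt, (abs_le.1 C.contact).2, (abs_le.1 hapex.pos).2, (abs_le.1 hone.pos).1,
    A.mul_lt_inv, A.le_mul, A.le, A.mul_nonneg]

lemma apex_hit (H : Chain n P V e t g L) (A : Admissible n ρ κ e e' t) (hrest : g 0 = g 1)
    (C : Row.Hit n κ L R 0) (hv : |L.vel 0 - V (g 0 + 1)| ≤ e) :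
    Chain n P V e' t (Function.update g 0 (g 0 + 1)) R := by
  refine H.pass A.pos hrest (fun h => absurd rfl h) A.le_large A.time C.pos C.other ?_
    (fun h => absurd rfl h)
  linarith [abs_sub_le (R.vel (0 + 1)) (L.vel 0) (V (g 0 + 1)), C.outer, A.add_le_large]

end Chain

/-! ### The train -/

/-- The state of the train, whose ball `i` starts at `Q i`: the pulse of velocity `-1` that enters
at the last ball is carried by ball `r` (it has left the train if `r = 0`), and each ball beyond
`r` rests where its predecessor started. -/
structure Train (p : ℕ) (Q : ℕ → ℝ) (e t : ℝ) (r : ℕ) (R : Row) : Prop where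
  le : r ≤ p
  head : r ≠ 0 → R.Near r e t (Q p - t) (-1)
  before : ∀ i, 1 ≤ i → i < r → R.Near i e t (Q i) 0
  after : ∀ i, r < i → i ≤ p → R.Near i e t (Q (i - 1)) 0

namespace Train

variable {p n r i : ℕ} {Q : ℕ → ℝ} {ρ κ e e' t t' : ℝ} {L R : Row}

lemma move (H : Train p Q e t r R) (ht : t ≤ t') : Train p Q e t' r (R.move (t' - t)) where
  le := H.le
  head hr := (H.head hr).move ht (by ring)
  before i hi hir := (H.before i hi hir).move ht (by ring)
  after i hri hip := (H.after i hri hip).move ht (by ring)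

lemma mono (H : Train p Q e t r R) (he : e ≤ e') (ht : 0 ≤ t) : Train p Q e' t r R where
  le := H.le
  head hr := (H.head hr).mono he ht
  before i hi hir := (H.before i hi hir).mono he ht
  after i hri hip := (H.after i hri hip).mono he ht

lemma congr (H : Train p Q e t r L) (hpos : R.pos = L.pos)
    (hvel : ∀ i, 1 ≤ i → i ≤ p → R.vel i = L.vel i) : Train p Q e t r R where
  le := H.le
  head hr := (H.head hr).congr hpos (hvel r (by omega) H.le)
  before i hi hir := (H.before i hi hir).congr hpos (hvel i hi (hir.le.trans H.le))
  after i hri hip := (H.after i hri hip).congr hpos (hvel i (by omega) hip)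

lemma head_of_hit (H : Train p Q e t r L) (A : Admissible n ρ κ e e' t)
    (hQ : ∀ i < p, ρ⁻¹ ≤ Q (i + 1) - Q i) (hi : i < p)
    (hapex : r ≠ 0 → L.Near 0 (2 * e) t (Q 0) 0) (hr : r = 0 → i ≠ 0)
    (C : Row.Hit p κ L R i) : r = i + 1 := by
  have hcontact := (abs_le.1 C.contact).2
  have hinv := A.mul_lt_inv
  have hle := A.le_mul
  rcases lt_trichotomy r (i + 1) with hlt | heq | hgt
  · exfalso
    have outer := H.after (i + 1) hlt (by omega)
    rw [Nat.add_sub_cancel] at outer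
    rcases eq_or_ne r i with rfl | hne
    · have inner := H.head (by omega)
      linarith [C.approach, (abs_le.1 inner.vel).2, (abs_le.1 outer.vel).1, A.le, A.inv_le]
    · have inner := H.after i (by omega) (by omega)
      have hgap := hQ (i - 1) (by omega)
      rw [Nat.sub_add_cancel (by omega)] at hgap
      linarith [(abs_le.1 inner.pos).2, (abs_le.1 outer.pos).1, A.le, A.mul_nonneg]
  · exact heq
  · exfalso
    have outer := H.before (i + 1) (by omega) hgt
    have inner : L.Near i (2 * e) t (Q i) 0 := by
      rcases Nat.eq_zero_or_pos i with rfl | hpos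
      · exact hapex (by omega)
      · exact (H.before i hpos (by omega)).mono (by linarith [A.err_nonneg]) A.time
    linarith [hQ i hi, (abs_le.1 inner.pos).2, (abs_le.1 outer.pos).1, A.le, A.mul_nonneg]

lemma advance (H : Train p Q e t (i + 1) L) (A : Admissible n ρ κ e e' t)
    (hapex : L.Near 0 (2 * e) t (Q 0) 0) (C : Row.Hit p κ L R i) : Train p Q e' t i R where
  le := by have := H.le; omega
  head _ := (C.near_inner (H.head (by omega)) A.time).mono A.add_le_large A.time
  before j hj hji := ((H.before j hj (by omega)).mono A.le_large A.time).congr C.pos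
    (C.other j (by have := H.le; omega) (by omega) (by omega))
  after j hij hjp := by
    rcases eq_or_ne j (i + 1) with rfl | hne
    · have inner : L.Near i (2 * e) t (Q i) 0 := by
        rcases Nat.eq_zero_or_pos i with rfl | hpos
        · exact hapex
        · exact (H.before i hpos (by omega)).mono (by linarith [A.err_nonneg]) A.time
      exact (C.near_outer inner A.time).mono
        (by linarith [A.mul_le_large, A.le_mul, A.le, A.err_nonneg]) A.time
    · exact ((H.after j (by omega) hjp).mono A.le_large A.time).congr C.pos
        (C.other j (by omega) (by omega) hne)

end Train

/-! ### The apex between the arms -/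

/-- The three rows of balls that share the apex as their ball `0`: the arms `B` (`false`) and `C`
(`true`), and the train `A`. -/
inductive Ray
  | arm (i : Bool)
  | train

/-- The index of the last ball of a row, for arms of balls `0, …, n` and a train of balls
`0, …, p`. -/
def Ray.len (n p : ℕ) : Ray → ℕ
  | arm _ => n
  | train => p

/-- The reduced coordinates of all rows at one instant. -/
abbrev Snapshot := Ray → Row

namespace Snapshot

/-- The snapshot after free motion during a time `d`. -/
def move (s : Snapshot) (d : ℝ) : Snapshot := fun o => (s o).move d

/-- The directions of the three rows add up to `0`, hence so do the coordinates of the apex. -/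
structure Balanced (s : Snapshot) : Prop where
  pos (i : Bool) : (s .train).pos 0 = -((s (.arm i)).pos 0 + (s (.arm !i)).pos 0)
  vel (i : Bool) : (s .train).vel 0 = -((s (.arm i)).vel 0 + (s (.arm !i)).vel 0)

/-- The snapshot is balanced and its reduced gaps lie in `[ρ⁻¹, 1]`. -/
structure Spaced (n p : ℕ) (ρ : ℝ) (s : Snapshot) : Prop extends Balanced s where
  le_gap : ∀ o, ∀ k < o.len n p, ρ⁻¹ ≤ (s o).pos (k + 1) - (s o).pos k
  gap_le : ∀ o, ∀ k < o.len n p, (s o).pos (k + 1) - (s o).pos k ≤ 1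

/-- All reduced gaps are bounded below by `-κ`. -/
def Separated (n p : ℕ) (κ : ℝ) (s : Snapshot) : Prop :=
  ∀ o, ∀ k < o.len n p, -κ ≤ (s o).pos (k + 1) - (s o).pos k

/-- An approximately elastic collision between the balls `k` and `k + 1` of the row `o`, turning
the snapshot `l` into `s`.  If the apex is hit (`k = 0`), the half of its velocity change in the
direction of `o` shows up, with the opposite sign, in the directions of the other two rows, which
have inner product `-1/2` with that of `o`. -/
structure Hit (n p : ℕ) (κ : ℝ) (l s : Snapshot) (o : Ray) (k : ℕ) : Prop where
  lt : k < o.len n p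
  row : Row.Hit (o.len n p) κ (l o) (s o) k
  pos : ∀ o', (s o').pos = (l o').pos
  vel : ∀ o' ≠ o, ∀ j ≤ o'.len n p, k ≠ 0 ∨ j ≠ 0 → (s o').vel j = (l o').vel j
  turn : k = 0 → ∀ o' ≠ o,
    |(s o').vel 0 - ((l o').vel 0 + ((l o).vel 0 - (l o).vel 1) / 2)| ≤ κ

end Snapshot

/-- The apex can head for the arm `i` when this arm has been hit `a` times and the other one `b`
times. -/
def HeadsTo (lead i : Bool) (a b : ℕ) : Prop := if i = lead then a = b ∧ 1 ≤ a else b = a + 1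

/-- The speed of the apex after `N ≥ 1` hits of the arms. -/
noncomputable def bounceSpeed (N : ℕ) : ℝ := 3 / 2 ^ (N + 1)

lemma bounceSpeed_succ (N : ℕ) : bounceSpeed (N + 1) = bounceSpeed N / 2 := by
  rw [bounceSpeed, bounceSpeed, pow_succ _ (N + 1), div_div]

lemma bounceSpeed_pos (N : ℕ) : 0 < bounceSpeed N := by unfold bounceSpeed; positivity

namespace HeadsTo

variable {lead i : Bool} {n a b : ℕ}

lemma next (H : HeadsTo lead i a b) : HeadsTo lead (!i) b (a + 1) := by
  unfold HeadsTo at *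
  cases i <;> cases lead <;> simp_all

lemma behind_ne_zero (H : HeadsTo lead i a b) : b ≠ 0 := by
  unfold HeadsTo at H
  split_ifs at H <;> omega

lemma add_lt (H : HeadsTo lead i a b) (ha : a < n) : a + b < 2 * n := by
  unfold HeadsTo at H
  split_ifs at H <;> omega

lemma eq_of_le (H : HeadsTo lead i a b) (h : b ≤ a) : i = lead ∧ b = a := by
  unfold HeadsTo at H
  split_ifs at H with hi
  · exact ⟨hi, H.1.symm⟩
  · omega

lemma eq_of_lt (H : HeadsTo lead i a b) (h : a < b) : lead = !i ∧ b = a + 1 := by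
  unfold HeadsTo at H
  split_ifs at H with hi
  · omega
  · exact ⟨Bool.eq_not.2 (Ne.symm hi), H⟩

lemma pulseSpeed_eq (H : HeadsTo lead i a b) :
    pulseSpeed lead i (a + 1) = bounceSpeed (a + b) := by
  have h4 : (4 : ℝ) ^ a = 2 ^ a * 2 ^ a := by rw [← mul_pow]; norm_num
  unfold HeadsTo at H
  unfold pulseSpeed bounceSpeed
  split_ifs at H ⊢ with hi ha
  · omega
  · rw [← H.1, pow_succ 4, h4, pow_succ, pow_add]
    field_simp
    norm_num
  · rw [H, pow_succ 4, h4, show a + (a + 1) + 1 = a + a + 2 by ring, pow_add, pow_add]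
    norm_num

lemma pulseSpeed_lead_eq (H : HeadsTo lead i a b) (h : a < b) (hb : b ≠ 1) :
    pulseSpeed lead lead b = 2 * bounceSpeed (a + b) := by
  obtain ⟨rfl, rfl⟩ := H.eq_of_lt h
  rw [← H.pulseSpeed_eq, pulseSpeed, pulseSpeed, if_pos rfl, if_neg hb,
    if_neg (Bool.self_ne_not i)]
  ring

end HeadsTo

/-- An upper bound for the time of the `N`-th hit of the arms, if the apex first has to cross the
gap `w`: a unit gap is crossed at the speed `bounceSpeed N` in time `2 ^ (N + 1) / 3`. -/
noncomputable def hitTime (p : ℕ) (w : ℝ) (N : ℕ) : ℝ :=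
  p + if N = 1 then 2 * w else 2 / 3 * (2 ^ N - 1)

lemma hitTime_succ_add_le {p N : ℕ} {w : ℝ} (hw : w ≤ 1) (hN : N ≠ 0) :
    hitTime p w N + 2 ^ (N + 1) / 3 * (1 - if N = 1 then w else 0) ≤ hitTime p w (N + 1) := by
  unfold hitTime
  rw [if_neg (by omega : N + 1 ≠ 1), pow_succ]
  split_ifs with h
  · norm_num [h]
    linarith
  · linarith

namespace Snapshot

/-- The gap between the apex and the first ball of the arm `i`. -/
def firstGap (s : Snapshot) (i : Bool) : ℝ := (s (.arm i)).pos 1 - (s (.arm i)).pos 0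

/-- The coordinate of the apex along the arm `i` when it turns towards this arm, which has been hit
`a` times.  On its way to the first hit it moves equally far along both arms. -/
noncomputable def departure (s₀ : Snapshot) (i : Bool) (a : ℕ) : ℝ :=
  (s₀ (.arm i)).pos a + if a = 0 then s₀.firstGap !i else 0

end Snapshot

/-- The first gaps of the arms, and lower bounds for the other gaps, after the last hit of the
arms at time `τ`.  The arm `i` was hit first, and `w` is the distance its last pulse had covered
until then. -/
structure Departing (n : ℕ) (ρ : ℝ) (s₀ : Snapshot) (e t : ℝ) (s : Snapshot) (i : Bool)
    (τ : ℝ) : Prop where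
  head : ∃ w, 0 ≤ w ∧ (n = 1 → w ≤ 2 / 3 + e) ∧ (n ≠ 1 → 2 * ρ⁻¹ - e ≤ w) ∧
    |(s (.arm i)).pos 1 - ((s₀ (.arm i)).pos n + (w + (t - τ) * pulseSpeed i i n))| ≤ e * (1 + t)
  opened : ∀ j, ∀ k, 1 ≤ k → k < n → (t - τ) * (2 / 4 ^ n) - 2 * (e * (1 + t)) ≤
    (s (.arm j)).pos (k + 1) - (s (.arm j)).pos k

/-- After the hit of the arm `!i` at time `τ` the apex moves towards the arm `i`; `c` counts the
hits of the arms. -/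
structure Bouncing (n p : ℕ) (ρ : ℝ) (s₀ : Snapshot) (e t : ℝ) (s : Snapshot) (lead : Bool)
    (c : Bool → ℕ) (τ : ℝ) (i : Bool) : Prop where
  heads : HeadsTo lead i (c i) (c !i)
  ahead : (s (.arm i)).Near 0 e t (s₀.departure i (c i) + (t - τ) * bounceSpeed (c i + c !i))
    (bounceSpeed (c i + c !i))
  behind : (s (.arm !i)).Near 0 e t ((s₀ (.arm !i)).pos (c !i)) 0
  time : τ ≤ hitTime p (s₀.firstGap lead) (c i + c !i) + e
  pushed : c (!i) = n → |(s (.arm !i)).pos 1 -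
    ((s₀ (.arm !i)).pos n + (t - τ) * pulseSpeed lead (!i) n)| ≤ e * (1 + t)
  departing : c i = n → Departing n ρ s₀ e t s i τ

/-- The motion of the apex, where the pulse of the train is at ball `r` and `c` counts the hits of
the arms: it waits for the pulse of the train, moves equally fast towards both arms until it
reaches the arm `lead`, and then bounces between the arms. -/
inductive Apex (n p : ℕ) (ρ : ℝ) (s₀ : Snapshot) (e t : ℝ) (s : Snapshot) (lead : Bool) (r : ℕ)
    (c : Bool → ℕ) (τ : ℝ) : Prop
  | idle (hr : r ≠ 0) (hc : ∀ i, c i = 0)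
      (near : ∀ i, (s (.arm i)).Near 0 e t ((s₀ (.arm i)).pos 0) 0)
  | start (hr : r = 0) (hc : ∀ i, c i = 0) (time : τ ≤ p + e)
      (near : ∀ i, (s (.arm i)).Near 0 e t ((s₀ (.arm i)).pos 0 + (t - τ) * (1 / 2)) (1 / 2))
  | bouncing (hr : r = 0) (i : Bool) (bouncing : Bouncing n p ρ s₀ e t s lead c τ i)

section Apex

variable {n p r : ℕ} {ρ e e' t t' τ : ℝ} {s₀ s l : Snapshot} {lead i : Bool} {c : Bool → ℕ}

lemma Departing.congr (H : Departing n ρ s₀ e t l i τ) (he : e ≤ e') (ht : 0 ≤ t)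
    (hpos : ∀ o, (s o).pos = (l o).pos) : Departing n ρ s₀ e' t s i τ := by
  have hmul : e * (1 + t) ≤ e' * (1 + t) := mul_le_mul_of_nonneg_right he (by linarith)
  obtain ⟨w, hw, hone, hne, hpush⟩ := H.head
  refine ⟨⟨w, hw, fun h => (hone h).trans (by linarith),
    fun h => le_trans (by linarith) (hne h), ?_⟩, fun j k hk hkn => ?_⟩
  · rw [hpos]
    exact hpush.trans hmul
  · rw [hpos]
    linarith [H.opened j k hk hkn]

lemma Bouncing.congr (H : Bouncing n p ρ s₀ e t l lead c τ i) (he : e ≤ e') (ht : 0 ≤ t)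
    (hpos : ∀ o, (s o).pos = (l o).pos)
    (hvel : ∀ i, (s (.arm i)).vel 0 = (l (.arm i)).vel 0) :
    Bouncing n p ρ s₀ e' t s lead c τ i where
  heads := H.heads
  ahead := (H.ahead.mono he ht).congr (hpos _) (hvel i)
  behind := (H.behind.mono he ht).congr (hpos _) (hvel !i)
  time := H.time.trans (by linarith)
  pushed hc := by
    rw [hpos]
    exact (H.pushed hc).trans (mul_le_mul_of_nonneg_right he (by linarith))
  departing hc := (H.departing hc).congr he ht hpos

lemma Apex.congr (H : Apex n p ρ s₀ e t l lead r c τ) (he : e ≤ e') (ht : 0 ≤ t)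
    (hpos : ∀ o, (s o).pos = (l o).pos)
    (hvel : ∀ i, (s (.arm i)).vel 0 = (l (.arm i)).vel 0) :
    Apex n p ρ s₀ e' t s lead r c τ := by
  cases H with
  | idle hr hc near =>
    exact .idle hr hc fun i => ((near i).mono he ht).congr (hpos _) (hvel i)
  | start hr hc time near =>
    exact .start hr hc (by linarith) fun i => ((near i).mono he ht).congr (hpos _) (hvel i)
  | bouncing hr i H => exact .bouncing hr i (H.congr he ht hpos hvel)

end Apex

/-- The state of the whole system at time `t`, up to the error `e`: the pulse of the train is at
ball `r`, the balls `k` and `k + 1` of the arm `i` have collided `g i k` times, and the apex has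
last been hit at time `τ`. -/
structure Relay (n p : ℕ) (ρ : ℝ) (s₀ : Snapshot) (e t : ℝ) (s : Snapshot) (lead : Bool) (r : ℕ)
    (g : Bool → ℕ → ℕ) (τ : ℝ) : Prop where
  le : τ ≤ t
  train : Train p (s₀ .train).pos e t r (s .train)
  chain (i : Bool) : Chain n (s₀ (.arm i)).pos (pulseSpeed lead i) e t (g i) (s (.arm i))
  apex : Apex n p ρ s₀ e t s lead r (fun i => g i 0) τ

namespace Relay

variable {n p r : ℕ} {ρ e t t' τ : ℝ} {s₀ s : Snapshot} {lead i : Bool} {g : Bool → ℕ → ℕ}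

lemma near_one_move (H : Relay n p ρ s₀ e t s lead r g τ) (hn : 0 < n) (hfull : g i 0 = n)
    {a : ℝ} (hpos : |(s (.arm i)).pos 1 - (a + (t - τ) * pulseSpeed lead i n)| ≤ e * (1 + t))
    (ht : t ≤ t') :
    |(s.move (t' - t) (.arm i)).pos 1 - (a + (t' - τ) * pulseSpeed lead i n)| ≤ e * (1 + t') :=
  have hnear : (s (.arm i)).Near 1 e t _ _ := ⟨(H.chain i).abs_vel_one_sub_le hn hfull, hpos⟩
  (hnear.move ht (by ring)).pos

lemma departing_move (H : Relay n p ρ s₀ e t s lead r g τ) (hn : 0 < n)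
    (D : Departing n ρ s₀ e t s i τ) (hfull : ∀ j, g j 0 = n) (hi : i = lead) (ht : t ≤ t') :
    Departing n ρ s₀ e t' (s.move (t' - t)) i τ := by
  subst hi
  obtain ⟨w, hw, hone, hne, hpush⟩ := D.head
  refine ⟨⟨w, hw, hone, hne, ?_⟩, fun j k hk hkn => ?_⟩
  · rw [← add_assoc] at hpush ⊢
    exact H.near_one_move hn (hfull i) hpush ht
  · exact (H.chain j).gap_move (pulseProfile_pulseSpeed _ _) ht (hfull j) hk hkn
      (D.opened j k hk hkn)

lemma bouncing_move (H : Relay n p ρ s₀ e t s lead r g τ) (hn : 0 < n)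
    (B : Bouncing n p ρ s₀ e t s lead (fun i => g i 0) τ i) (ht : t ≤ t') :
    Bouncing n p ρ s₀ e t' (s.move (t' - t)) lead (fun i => g i 0) τ i where
  heads := B.heads
  ahead := B.ahead.move ht (by ring)
  behind := B.behind.move ht (by ring)
  time := B.time
  pushed hc := H.near_one_move hn hc (B.pushed hc) ht
  departing hc := by
    obtain ⟨hi, heq⟩ := B.heads.eq_of_le (((H.chain !i).bound 0 (Nat.zero_le n)).trans hc.ge)
    refine H.departing_move hn (B.departing hc) (fun j => ?_) hi ht
    rcases Bool.eq_or_eq_not j i with rfl | rfl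
    exacts [hc, heq.trans hc]

lemma move (H : Relay n p ρ s₀ e t s lead r g τ) (hn : 0 < n) (ht : t ≤ t') :
    Relay n p ρ s₀ e t' (s.move (t' - t)) lead r g τ where
  le := H.le.trans ht
  train := H.train.move ht
  chain i := (H.chain i).move ht
  apex := by
    cases H.apex with
    | idle hr hc near => exact .idle hr hc fun i => (near i).move ht (by ring)
    | start hr hc time near => exact .start hr hc time fun i => (near i).move ht (by ring)
    | bouncing hr i B => exact .bouncing hr i (H.bouncing_move hn B ht)

end Relay

namespace Bouncing

variable {n p : ℕ} {ρ κ e e' t τ : ℝ} {s₀ s l : Snapshot} {lead i : Bool} {c : Bool → ℕ}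

lemma travel_le (B : Bouncing n p ρ s₀ e t s lead c τ i) (h₀ : s₀.Spaced n p ρ) (hlt : c i < n)
    (hnext : (s (.arm i)).pos 0 ≤ (s₀ (.arm i)).pos (c i + 1) + 2 * (e * (1 + t))) :
    (t - τ) * bounceSpeed (c i + c !i) ≤
      1 - (if c i + c (!i) = 1 then s₀.firstGap lead else 0) + 3 * (e * (1 + t)) := by
  have hpos := (abs_le.1 B.ahead.pos).1
  have hgap := h₀.gap_le (.arm i) (c i) hlt
  have hbehind := B.heads.behind_ne_zero
  unfold Snapshot.departure at hpos
  by_cases hc : c i = 0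
  · obtain ⟨rfl, hcount⟩ := B.heads.eq_of_lt (by omega)
    rw [if_pos hc] at hpos
    rw [if_pos (by omega)]
    linarith
  · rw [if_neg hc] at hpos
    rw [if_neg (by omega)]
    linarith

lemma le_hitTime (B : Bouncing n p ρ s₀ e t s lead c τ i) (A : Admissible n ρ κ e e' t)
    (h₀ : s₀.Spaced n p ρ) (hlt : c i < n)
    (hnext : (s (.arm i)).pos 0 ≤ (s₀ (.arm i)).pos (c i + 1) + 2 * (e * (1 + t))) :
    t ≤ hitTime p (s₀.firstGap lead) (c i + c (!i) + 1) + e + 4 ^ n * (e * (1 + t)) := by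
  have htravel := B.travel_le h₀ hlt hnext
  have hN := B.heads.behind_ne_zero
  have hcount := B.heads.add_lt hlt
  have htime := B.time
  set N := c i + c !i
  have hstep := hitTime_succ_add_le (p := p) (N := N)
    (h₀.gap_le (.arm lead) 0 (Nat.zero_lt_of_lt hlt)) (by omega)
  have hpow : (2 : ℝ) ^ (N + 1) ≤ 4 ^ n := by
    rw [show (4 : ℝ) = 2 ^ 2 by norm_num, ← pow_mul]
    exact pow_le_pow_right₀ one_le_two (by omega)
  have herr := mul_le_mul_of_nonneg_right hpow A.mul_nonneg
  have hduration : t - τ = 2 ^ (N + 1) / 3 * ((t - τ) * bounceSpeed N) := by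
    unfold bounceSpeed
    field_simp
  have := mul_le_mul_of_nonneg_left htravel (by positivity : (0 : ℝ) ≤ 2 ^ (N + 1) / 3)
  rw [← hduration] at this
  unfold Snapshot.firstGap at *
  linarith

lemma departing_of_hit (B : Bouncing n p ρ s₀ e t l lead c τ i) (A : Admissible n ρ κ e e' t)
    (h₀ : s₀.Spaced n p ρ) (hs : s.Separated n p e') (hτ : τ ≤ t)
    (C : Snapshot.Hit n p κ l s (.arm i) 0) (hlt : c i < n) (hfull : c (!i) = n)
    (hone : (l (.arm i)).Near 1 e t ((s₀ (.arm i)).pos (c i + 1)) 0) :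
    Departing n ρ s₀ e' t s (!i) t := by
  have hcontact := abs_le.1 C.row.contact
  have hX := A.mul_nonneg
  have hle := A.le_mul
  have hX' := A.mul_le_large
  have hκ := A.le
  have hnext : (l (.arm i)).pos 0 ≤ (s₀ (.arm i)).pos (c i + 1) + 2 * (e * (1 + t)) := by
    rw [zero_add] at hcontact
    linarith [(abs_le.1 hone.pos).2]
  obtain ⟨rfl, hcount⟩ := B.heads.eq_of_lt (hlt.trans_eq hfull.symm)
  have hspeed : 0 ≤ pulseSpeed (!i) (!i) n :=
    le_trans (by positivity) ((pulseProfile_pulseSpeed _ _).lower n A.pos)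
  refine ⟨⟨(t - τ) * pulseSpeed (!i) (!i) n, mul_nonneg (sub_nonneg.2 hτ) hspeed, ?_, ?_, ?_⟩,
    fun j k _ hk => ?_⟩
  · rintro rfl
    have htravel := B.travel_le h₀ hlt hnext
    have hgap := h₀.le_gap (.arm !i) 0 A.pos
    rw [if_pos (by omega), show c i + c (!i) = 1 by omega] at htravel
    simp only [bounceSpeed, pulseSpeed, if_true, Snapshot.firstGap] at htravel ⊢
    linarith [A.inv_pos]
  · intro hn
    have hpos := (abs_le.1 B.ahead.pos).2
    have hgap := h₀.le_gap (.arm i) (c i) hlt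
    have htwice := B.heads.pulseSpeed_lead_eq (by omega) (by omega)
    rw [Snapshot.departure, if_neg (by omega), add_zero] at hpos
    rw [← hfull, htwice]
    linarith [(abs_le.1 hone.pos).1, hcontact.2]
  · rw [sub_self, zero_mul, add_zero, C.pos]
    exact (B.pushed hfull).trans (by linarith [mul_nonneg (A.err_nonneg.trans A.le_large) A.time])
  · have := hs (.arm j) k hk
    have := mul_nonneg (A.err_nonneg.trans A.le_large) A.time
    rw [sub_self, zero_mul]
    linarith [A.err_nonneg, A.le_large]

/-- The collision stops the apex along the arm `i` and, in the direction of the other arm, leaves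
it half of its velocity. -/
lemma hit (B : Bouncing n p ρ s₀ e t l lead c τ i) (A : Admissible n ρ κ e e' t)
    (h₀ : s₀.Spaced n p ρ) (hs : s.Separated n p e') (hτ : τ ≤ t)
    (C : Snapshot.Hit n p κ l s (.arm i) 0) (hlt : c i < n)
    (hone : (l (.arm i)).Near 1 e t ((s₀ (.arm i)).pos (c i + 1)) 0) :
    Bouncing n p ρ s₀ e' t s lead (Function.update c i (c i + 1)) t (!i) := by
  have hle := A.le_mul
  have hX := A.mul_nonneg
  have hX' := A.mul_le_large
  have hκ := A.le
  constructor <;> simp only [Bool.not_not, Function.update_self, sub_self, zero_mul, add_zero,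
    Function.update_of_ne (Bool.not_ne_self i)]
  case heads => exact B.heads.next
  case ahead =>
    rw [Snapshot.departure, if_neg B.heads.behind_ne_zero, add_zero,
      show c (!i) + (c i + 1) = c i + c (!i) + 1 by ring, bounceSpeed_succ]
    refine ⟨?_, by rw [C.pos]; exact (B.behind.mono A.le_large A.time).pos⟩
    have hturn := abs_le.1 (C.turn rfl (.arm !i) (by simp))
    have hahead := abs_le.1 B.ahead.vel
    have hbehind := abs_le.1 B.behind.vel
    have hrest := abs_le.1 hone.vel
    exact abs_le.2 ⟨by linarith, by linarith⟩
  case behind => exact (C.row.near_inner hone A.time).mono A.add_le_large A.time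
  case time =>
    have := B.le_hitTime A h₀ hlt
      (by linarith [(abs_le.1 hone.pos).2, (abs_le.1 C.row.contact).1])
    rw [show c (!i) + (c i + 1) = c i + c (!i) + 1 by ring]
    linarith [A.large, A.mul_le_pow_mul]
  case pushed =>
    intro hn
    rw [C.pos, ← hn]
    exact (hone.mono A.le_large A.time).pos
  case departing => exact fun hn => B.departing_of_hit A h₀ hs hτ C hlt hn hone

/-- The first hit of an arm: the apex has reached both arms with velocity `1 / 2`, so it leaves
with velocity `1 / 2 + 1 / 4`. -/
lemma of_start (A : Admissible n ρ κ e e' t) (hc : ∀ i, c i = 0) (time : τ ≤ p + e)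
    (near : ∀ i, (l (.arm i)).Near 0 e t ((s₀ (.arm i)).pos 0 + (t - τ) * (1 / 2)) (1 / 2))
    (C : Snapshot.Hit n p κ l s (.arm i) 0)
    (hone : (l (.arm i)).Near 1 e t ((s₀ (.arm i)).pos 1) 0) :
    Bouncing n p ρ s₀ e' t s i (Function.update c i (c i + 1)) t (!i) := by
  have hle := A.le_mul
  have hX := A.mul_nonneg
  have hX' := A.mul_le_large
  have hκ := A.le
  have hcontact := abs_le.1 C.row.contact
  rw [zero_add] at hcontact
  have hnear := abs_le.1 (near i).pos
  have hpos := abs_le.1 hone.pos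
  constructor <;> simp only [Bool.not_not, Function.update_self, sub_self, zero_mul, add_zero,
    Function.update_of_ne (Bool.not_ne_self i), hc, zero_add]
  case heads => simp [HeadsTo]
  case ahead =>
    rw [Snapshot.departure, if_pos rfl, Bool.not_not, Snapshot.firstGap, bounceSpeed]
    have hturn := abs_le.1 (C.turn rfl (.arm !i) (by simp))
    have hvel := abs_le.1 (near i).vel
    have hvel' := abs_le.1 (near !i).vel
    have hpos' := abs_le.1 (near !i).pos
    have hrest := abs_le.1 hone.vel
    have htime := mul_nonneg (A.err_nonneg.trans A.le_large) A.time
    refine ⟨abs_le.2 ⟨by linarith, by linarith⟩, ?_⟩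
    rw [C.pos]
    exact abs_le.2 ⟨by linarith, by linarith⟩
  case behind => exact (C.row.near_inner hone A.time).mono A.add_le_large A.time
  case time =>
    rw [hitTime, if_pos rfl, Snapshot.firstGap]
    linarith
  case pushed =>
    intro hn
    rw [C.pos, ← hn]
    exact (hone.mono A.le_large A.time).pos
  case departing => exact fun hn => absurd hn A.pos.ne

end Bouncing

/-- The collision counts `g` after one more collision between the balls `k` and `k + 1` of the
arm `i`. -/
def bump (g : Bool → ℕ → ℕ) (i : Bool) (k : ℕ) : Bool → ℕ → ℕ :=
  Function.update g i (Function.update (g i) k (g i k + 1))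

lemma bump_self (g : Bool → ℕ → ℕ) (i : Bool) (k : ℕ) :
    bump g i k i = Function.update (g i) k (g i k + 1) :=
  Function.update_self _ _ _

lemma bump_not (g : Bool → ℕ → ℕ) (i : Bool) (k : ℕ) : bump g i k (!i) = g !i :=
  Function.update_of_ne (Bool.not_ne_self i) _ _

lemma bump_apex (g : Bool → ℕ → ℕ) (i : Bool) :
    (fun j => bump g i 0 j 0) = Function.update (fun j => g j 0) i (g i 0 + 1) := by
  ext j
  rcases Bool.eq_or_eq_not j i with rfl | rfl
  · simp [bump_self]
  · simp [bump_not]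

lemma bump_succ_apex (g : Bool → ℕ → ℕ) (i : Bool) (k : ℕ) :
    (fun j => bump g i (k + 1) j 0) = fun j => g j 0 := by
  ext j
  rcases Bool.eq_or_eq_not j i with rfl | rfl
  · simp [bump_self]
  · simp [bump_not]

namespace Relay

variable {n p r k : ℕ} {ρ κ e e' t τ : ℝ} {s₀ s l : Snapshot} {lead i : Bool}
  {g : Bool → ℕ → ℕ}

lemma train_of_hit_arm (H : Relay n p ρ s₀ e t l lead r g τ) (A : Admissible n ρ κ e e' t)
    (C : Snapshot.Hit n p κ l s (.arm i) k) : Train p (s₀ .train).pos e' t r (s .train) :=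
  (H.train.mono A.le_large A.time).congr (C.pos _)
    fun j hj hjp => C.vel _ (by simp) j hjp (.inr (by omega))

lemma chain_of_hit_ne {o : Ray} (H : Relay n p ρ s₀ e t l lead r g τ)
    (A : Admissible n ρ κ e e' t) (C : Snapshot.Hit n p κ l s o k) (ho : .arm i ≠ o) :
    Chain n (s₀ (.arm i)).pos (pulseSpeed lead i) e' t (g i) (s (.arm i)) :=
  ((H.chain i).mono A.le_large A.time).congr (C.pos _)
    fun j hj hjn => C.vel _ ho j hjn (.inr (by omega))

lemma chain_bump {V : Bool → ℕ → ℝ}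
    (hit : Chain n (s₀ (.arm i)).pos (V i) e t (Function.update (g i) k (g i k + 1)) (s (.arm i)))
    (other : Chain n (s₀ (.arm !i)).pos (V !i) e t (g !i) (s (.arm !i))) (j : Bool) :
    Chain n (s₀ (.arm j)).pos (V j) e t (bump g i k j) (s (.arm j)) := by
  rcases Bool.eq_or_eq_not j i with rfl | rfl
  · rwa [bump_self]
  · rwa [bump_not]

lemma hit_arm_succ (H : Relay n p ρ s₀ e t l lead r g τ) (A : Admissible n ρ κ e e' t)
    (h₀ : s₀.Spaced n p ρ) (C : Snapshot.Hit n p κ l s (.arm i) (k + 1)) :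
    Relay n p ρ s₀ e' t s lead r (bump g i (k + 1)) τ where
  le := H.le
  train := H.train_of_hit_arm A C
  chain := chain_bump ((H.chain i).hit A (pulseProfile_pulseSpeed _ _) (h₀.le_gap (.arm i)) C.row
    C.lt) (H.chain_of_hit_ne A C (by simp))
  apex := by
    rw [bump_succ_apex]
    refine H.apex.congr A.le_large A.time C.pos fun j => ?_
    rcases Bool.eq_or_eq_not j i with rfl | rfl
    · exact C.row.other 0 (Nat.zero_le _) (by omega) (by omega)
    · exact C.vel _ (by simp) 0 (Nat.zero_le _) (.inl (Nat.succ_ne_zero k))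

lemma hit_arm_zero (H : Relay n p ρ s₀ e t l lead r g τ) (A : Admissible n ρ κ e e' t)
    (h₀ : s₀.Spaced n p ρ) (hs : s.Separated n p e') (C : Snapshot.Hit n p κ l s (.arm i) 0) :
    ∃ lead', Relay n p ρ s₀ e' t s lead' r (bump g i 0) t := by
  have hV := pulseProfile_pulseSpeed lead i
  have hother := H.chain_of_hit_ne A C (i := !i) (by simp)
  have hcontradiction : ¬ (l (.arm i)).Near 0 e t ((s₀ (.arm i)).pos (g i 0)) 0 := fun h =>
    (H.chain i).not_apex_hit_of_resting A hV (h₀.le_gap (.arm i)) h C.row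
  cases H.apex with
  | idle hr hc near => exact absurd (by rw [hc i]; exact near i) hcontradiction
  | start hr hc time near =>
    have h0 : g i 0 = 0 := hc i
    have hchain := (H.chain i).of_zero h0 (pulseSpeed i i)
    obtain ⟨hrest, -, hone⟩ := hchain.resting_of_apex_hit A (pulseProfile_pulseSpeed _ _)
      (fun h => absurd h0 h) C.row
    rw [h0, zero_add] at hone
    refine ⟨i, le_rfl, H.train_of_hit_arm A C,
      chain_bump (hchain.apex_hit A hrest C.row ?_) (hother.of_zero (hc _) _), ?_⟩
    · simpa [pulseSpeed, h0] using (near i).vel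
    · rw [bump_apex]
      exact .bouncing hr (!i) (.of_start A hc time near C hone)
  | bouncing hr j B =>
    rcases Bool.eq_or_eq_not i j with rfl | rfl
    · have hvel := B.ahead.vel
      rw [← B.heads.pulseSpeed_eq] at hvel
      obtain ⟨hrest, hlt, hone⟩ := (H.chain i).resting_of_apex_hit A hV
        (fun _ => by linarith [(abs_le.1 hvel).2]) C.row
      refine ⟨lead, le_rfl, H.train_of_hit_arm A C,
        chain_bump ((H.chain i).apex_hit A hrest C.row hvel) hother, ?_⟩
      rw [bump_apex]
      exact .bouncing hr (!i) (B.hit A h₀ hs H.le C hlt hone)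
    · exact absurd B.behind hcontradiction

end Relay

lemma Snapshot.Balanced.near_apex {e t : ℝ} {s₀ s : Snapshot} (hs : s.Balanced)
    (h₀ : s₀.Balanced) (near : ∀ i, (s (.arm i)).Near 0 e t ((s₀ (.arm i)).pos 0) 0) :
    (s .train).Near 0 (2 * e) t ((s₀ .train).pos 0) 0 := by
  have htrue := near true
  have hfalse := near !true
  have hpos := abs_le.1 htrue.pos
  have hpos' := abs_le.1 hfalse.pos
  have hvel := abs_le.1 htrue.vel
  have hvel' := abs_le.1 hfalse.vel
  constructor
  · rw [hs.vel true]
    exact abs_le.2 ⟨by linarith, by linarith⟩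
  · rw [hs.pos true, h₀.pos true]
    exact abs_le.2 ⟨by linarith, by linarith⟩

lemma Snapshot.Spaced.train_sub_le {n p k : ℕ} {ρ : ℝ} {s : Snapshot} (h : s.Spaced n p ρ)
    (hk : k ≤ p) : (s .train).pos p - (s .train).pos k ≤ p - k := by
  induction hk using Nat.decreasingInduction with
  | of_succ k hk ih =>
    push_cast at ih
    linarith [h.gap_le .train k hk]
  | self => simp

/-- Once the pulse has left the train, the apex moves away from it. -/
lemma Apex.vel_add_vel_pos {n p r : ℕ} {ρ κ e e' t τ : ℝ} {s₀ s : Snapshot} {lead : Bool}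
    {c : Bool → ℕ} (H : Apex n p ρ s₀ e t s lead r c τ) (A : Admissible n ρ κ e e' t)
    (hr : r = 0) (hc : ∀ i, c i ≤ n) :
    2 * (e * (1 + t)) < (s (.arm true)).vel 0 + (s (.arm false)).vel 0 := by
  have hpow := A.mul_lt_pow
  have hle := A.le_mul
  have hX := A.mul_nonneg
  cases H with
  | idle hr' => exact absurd hr hr'
  | start _ _ _ near =>
    have := (abs_le.1 (near true).vel).1
    have := (abs_le.1 (near false).vel).1
    linarith [A.mul_lt_inv, A.inv_le]
  | bouncing _ i B =>
    have hahead := (abs_le.1 B.ahead.vel).1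
    have hbehind := (abs_le.1 B.behind.vel).1
    have hspeed : 3 * (1 / 2 / 4 ^ n) ≤ bounceSpeed (c i + c !i) := by
      have h2 : (2 : ℝ) ^ (c i + c (!i) + 1) ≤ 2 * 4 ^ n := by
        rw [show (4 : ℝ) = 2 ^ 2 by norm_num, ← pow_mul, ← pow_succ']
        have := hc i
        have := hc !i
        exact pow_le_pow_right₀ one_le_two (by omega)
      rw [bounceSpeed, div_div, mul_one_div]
      gcongr
    cases i <;> simp only [Bool.not_true, Bool.not_false] at hahead hbehind hspeed <;> linarith

namespace Relay

variable {n p r k : ℕ} {ρ κ e e' t τ : ℝ} {s₀ s l : Snapshot} {lead i : Bool}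
  {g : Bool → ℕ → ℕ}

lemma near_apex_train (H : Relay n p ρ s₀ e t l lead r g τ) (h₀ : s₀.Balanced) (hl : l.Balanced)
    (hr : r ≠ 0) : (l .train).Near 0 (2 * e) t ((s₀ .train).pos 0) 0 := by
  cases H.apex with
  | idle _ _ near => exact hl.near_apex h₀ near
  | start hr' => exact absurd hr' hr
  | bouncing hr' => exact absurd hr' hr

lemma eq_of_hit_train (H : Relay n p ρ s₀ e t l lead r g τ) (A : Admissible n ρ κ e e' t)
    (h₀ : s₀.Spaced n p ρ) (hl : l.Balanced) (C : Snapshot.Hit n p κ l s .train k) :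
    r = k + 1 := by
  refine H.train.head_of_hit A (h₀.le_gap .train) C.lt
    (H.near_apex_train h₀.toBalanced hl) (fun hr hk => ?_) C.row
  subst hk
  have hone := (abs_le.1 (H.train.after 1 (by omega) C.lt).vel).1
  have hapex := H.apex.vel_add_vel_pos A hr fun i => (H.chain i).bound 0 (Nat.zero_le n)
  have happroach := C.row.approach
  have hzero := hl.vel true
  rw [zero_add] at happroach
  rw [Bool.not_true] at hzero
  linarith [A.le, A.le_mul]

lemma hit_train (H : Relay n p ρ s₀ e t l lead (k + 1) g τ) (A : Admissible n ρ κ e e' t)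
    (h₀ : s₀.Spaced n p ρ) (hl : l.Balanced) (C : Snapshot.Hit n p κ l s .train k) :
    Relay n p ρ s₀ e' t s lead k g t := by
  have hzero := H.near_apex_train h₀.toBalanced hl (Nat.succ_ne_zero k)
  refine ⟨le_rfl, H.train.advance A hzero C.row, fun i => H.chain_of_hit_ne A C (by simp), ?_⟩
  cases H.apex with
  | start hr => exact absurd hr (Nat.succ_ne_zero k)
  | bouncing hr => exact absurd hr (Nat.succ_ne_zero k)
  | idle _ hc near =>
    rcases eq_or_ne k 0 with rfl | hk
    · have hle := A.le_mul
      have hX := A.mul_le_large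
      have hhead := H.train.head (Nat.succ_ne_zero 0)
      refine .start rfl hc ?_ fun i => ⟨?_, ?_⟩
      · have hlen := h₀.train_sub_le (Nat.zero_le p)
        rw [Nat.cast_zero] at hlen
        have := (abs_le.1 C.row.contact).1
        have := (abs_le.1 hhead.pos).2
        have := (abs_le.1 hzero.pos).1
        linarith [A.le, A.mul_nonneg]
      · have hturn := abs_le.1 (C.turn rfl (.arm i) (by simp))
        have := abs_le.1 hhead.vel
        have := abs_le.1 hzero.vel
        have := abs_le.1 (near i).vel
        rw [zero_add] at *
        exact abs_le.2 ⟨by linarith [A.le, A.mul_nonneg], by linarith [A.le, A.mul_nonneg]⟩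
      · rw [sub_self, zero_mul, add_zero, C.pos]
        exact ((near i).mono A.le_large A.time).pos
    · exact .idle hk hc fun i => ((near i).mono A.le_large A.time).congr (C.pos _)
        (C.vel _ (by simp) 0 (Nat.zero_le _) (.inl hk))

/-- The number of collisions recorded by a state of the relay. -/
def count (n p r : ℕ) (g : Bool → ℕ → ℕ) : ℕ :=
  p - r + ∑ i, ∑ k ∈ Finset.range n, g i k

lemma count_bump (hk : k < n) : count n p r (bump g i k) = count n p r g + 1 := by
  have hsum : ∑ j ∈ Finset.range n, bump g i k i j = ∑ j ∈ Finset.range n, g i j + 1 := by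
    rw [bump_self, Finset.sum_update_of_mem (Finset.mem_range.2 hk),
      ← Finset.add_sum_erase _ _ (Finset.mem_range.2 hk), Finset.sdiff_singleton_eq_erase]
    ring
  have hother : bump g i k (!i) = g !i := bump_not g i k
  unfold count
  cases i <;> simp only [Fintype.sum_bool, Bool.not_true, Bool.not_false] at * <;>
    rw [hsum, hother] <;> ring

lemma count_le (H : Relay n p ρ s₀ e t s lead r g τ) : count n p r g ≤ p + 2 * (n * n) := by
  have := (H.chain true).sum_le
  have := (H.chain false).sum_le
  simp only [count, Fintype.sum_bool]
  omega

lemma hit {o : Ray} (H : Relay n p ρ s₀ e t l lead r g τ) (A : Admissible n ρ κ e e' t)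
    (h₀ : s₀.Spaced n p ρ) (hl : l.Balanced) (hs : s.Separated n p κ)
    (C : Snapshot.Hit n p κ l s o k) :
    ∃ lead' r' g' τ', count n p r' g' = count n p r g + 1 ∧
      Relay n p ρ s₀ e' t s lead' r' g' τ' := by
  rcases o with i | _
  · rcases k with _ | k
    · have hs' : s.Separated n p e' := fun o k hk =>
        (neg_le_neg (A.le.trans A.le_large)).trans (hs o k hk)
      obtain ⟨lead', H'⟩ := H.hit_arm_zero A h₀ hs' C
      exact ⟨lead', r, _, t, count_bump C.lt, H'⟩
    · exact ⟨lead, r, _, τ, count_bump C.lt, H.hit_arm_succ A h₀ C⟩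
  · obtain rfl := H.eq_of_hit_train A h₀ hl C
    refine ⟨lead, k, g, t, ?_, H.hit_train A h₀ hl C⟩
    have : k < p := C.lt
    unfold count
    omega

end Relay

lemma Snapshot.Spaced.apex_add_inv_le {n p k : ℕ} {ρ : ℝ} {s : Snapshot} {i : Bool}
    (h : s.Spaced n p ρ) (hρ : 0 ≤ ρ⁻¹) (hk : 0 < k) (hkn : k ≤ n) :
    (s (.arm i)).pos 0 + ρ⁻¹ ≤ (s (.arm i)).pos k := by
  induction k, hk using Nat.le_induction with
  | base => linarith [h.le_gap (.arm i) 0 hkn]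
  | succ k _ ih => linarith [ih (by omega), h.le_gap (.arm i) k hkn]

namespace Relay

variable {n p r : ℕ} {ρ κ e e' t τ : ℝ} {s₀ s : Snapshot} {lead : Bool} {g : Bool → ℕ → ℕ}

lemma time_le_of_ne_zero (H : Relay n p ρ s₀ e t s lead r g τ) (A : Admissible n ρ κ e e' t)
    (h₀ : s₀.Spaced n p ρ) (hs : s.Separated n p κ) (hl : s.Balanced) (hr : r ≠ 0) :
    t ≤ p + 4 * (e * (1 + t)) := by
  obtain ⟨k, rfl⟩ := Nat.exists_eq_succ_of_ne_zero hr
  have hnear : (s .train).Near k (2 * e) t ((s₀ .train).pos k) 0 := by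
    rcases Nat.eq_zero_or_pos k with rfl | hk
    · exact H.near_apex_train h₀.toBalanced hl hr
    · exact (H.train.before k hk k.lt_succ_self).mono (by linarith [A.err_nonneg]) A.time
  have hhead := (abs_le.1 (H.train.head hr).pos).2
  have hlen := h₀.train_sub_le (Nat.le_of_succ_le H.train.le)
  have := (abs_le.1 hnear.pos).1
  have := hs .train k H.train.le
  have : (0 : ℝ) ≤ k := k.cast_nonneg
  linarith [A.le, A.le_mul]

lemma _root_.Bouncing.eq_of_le_time {c : Bool → ℕ} (B : Bouncing n p ρ s₀ e t s lead c τ i)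
    (A : Admissible n ρ κ e e' t) (h₀ : s₀.Spaced n p ρ) (hle : c i ≤ n)
    (hnext : c i < n → (s (.arm i)).pos 0 ≤ (s₀ (.arm i)).pos (c i + 1) + 2 * (e * (1 + t)))
    (ht : p + 1 + 4 ^ n - 1 / 4 ≤ t) : c i = n := by
  by_contra hne
  have hlt := hle.lt_of_ne hne
  have htime := B.le_hitTime A h₀ hlt (hnext hlt)
  have hbehind := B.heads.behind_ne_zero
  have hpow : (2 : ℝ) ^ (c i + c (!i) + 1) ≤ 4 ^ n := by
    rw [show (4 : ℝ) = 2 ^ 2 by norm_num, ← pow_mul]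
    exact pow_le_pow_right₀ one_le_two (B.heads.add_lt hlt)
  rw [hitTime, if_neg (by omega)] at htime
  have hpos : (0 : ℝ) < 4 ^ n := by positivity
  linarith [A.small, A.inv_le, A.mul_lt_inv, A.le_mul, A.mul_nonneg]

lemma completed (H : Relay n p ρ s₀ e t s lead r g τ) (A : Admissible n ρ κ e e' t)
    (h₀ : s₀.Spaced n p ρ) (hs : s.Separated n p κ) (hl : s.Balanced) (hκ : n * κ ≤ e)
    (ht : p + 1 + 4 ^ n - 1 / 4 ≤ t) :
    r = 0 ∧ (∀ i, g i 0 = n) ∧ Bouncing n p ρ s₀ e t s lead (fun _ => n) τ lead := by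
  have hX := A.mul_nonneg
  have hle := A.le_mul
  have hsmall := A.mul_lt_inv
  have hinv := A.inv_le
  have hpow : (4 : ℝ) ≤ 4 ^ n := by
    simpa using pow_le_pow_right₀ (by norm_num : (1 : ℝ) ≤ 4) A.pos
  have hbound (i : Bool) : g i 0 ≤ n := (H.chain i).bound 0 (Nat.zero_le n)
  have hbehind (i : Bool) (hlt : g i 0 < n) :
      (s (.arm i)).pos 0 ≤ (s₀ (.arm i)).pos (g i 0 + 1) + 2 * (e * (1 + t)) := by
    linarith [(H.chain i).apex_le A.nonneg (hs (.arm i)) hlt]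
  cases H.apex with
  | idle hr => linarith [H.time_le_of_ne_zero A h₀ hs hl hr]
  | start _ hc time near =>
    have h0 : g lead 0 = 0 := hc lead
    have hfirst := hbehind lead (h0.trans_lt A.pos)
    rw [h0, zero_add] at hfirst
    linarith [(abs_le.1 (near lead).pos).1, h₀.gap_le (.arm lead) 0 A.pos]
  | bouncing hr i B =>
    have hfull : g i 0 = n := B.eq_of_le_time A h₀ (hbound i) (hbehind i) ht
    obtain ⟨rfl, heq⟩ := B.heads.eq_of_le ((hbound !i).trans hfull.ge)
    have hall (j : Bool) : g j 0 = n := by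
      rcases Bool.eq_or_eq_not j i with rfl | rfl
      exacts [hfull, heq.trans hfull]
    simp only [hall] at B
    exact ⟨hr, hall, B⟩

lemma count_of_completed (H : Relay n p ρ s₀ e t s lead r g τ) (hr : r = 0)
    (hfull : ∀ i, g i 0 = n) : count n p r g = p + n * (n + 1) := by
  have := (H.chain true).sum_of_full (hfull true)
  have := (H.chain false).sum_of_full (hfull false)
  simp only [count, hr, Fintype.sum_bool]
  omega

end Relay

namespace Bouncing

variable {n p : ℕ} {ρ e t τ : ℝ} {s₀ s : Snapshot} {i : Bool}

lemma le_delay (B : Bouncing n p ρ s₀ e t s i (fun _ => n) τ i)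
    (ht : p + 1 + 4 ^ n ≤ t) : 1 / 3 + (5 / 3 - e) / 4 ^ n ≤ (t - τ) / 4 ^ n := by
  have htime := B.time
  have h2 : (2 : ℝ) ^ (n + n) = 4 ^ n := by rw [pow_add, ← mul_pow]; norm_num
  rw [hitTime, if_neg (by omega), h2] at htime
  have h4 : (0 : ℝ) < 4 ^ n := by positivity
  rw [← sub_nonneg, show (t - τ) / 4 ^ n - (1 / 3 + (5 / 3 - e) / 4 ^ n) =
    (t - τ - 4 ^ n / 3 - (5 / 3 - e)) / 4 ^ n by field_simp; ring]
  exact div_nonneg (by linarith) h4.le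

lemma abs_firstGap_not_sub_le (B : Bouncing n p ρ s₀ e t s i (fun _ => n) τ i) :
    |s.firstGap (!i) - 3 * ((t - τ) / 4 ^ n)| ≤ 2 * (e * (1 + t)) := by
  have hpushed := abs_le.1 (B.pushed rfl)
  have hbehind := abs_le.1 B.behind.pos
  rw [pulseSpeed, if_neg (by simp), show (t - τ) * (3 / 4 ^ n) = 3 * ((t - τ) / 4 ^ n) by ring]
    at hpushed
  unfold Snapshot.firstGap
  exact abs_le.2 ⟨by linarith, by linarith⟩

lemma exists_abs_firstGap_sub_le (B : Bouncing n p ρ s₀ e t s i (fun _ => n) τ i) (hn : 0 < n) :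
    ∃ w, 0 ≤ w ∧ (n = 1 → w ≤ 2 / 3 + e) ∧ (n ≠ 1 → 2 * ρ⁻¹ - e ≤ w) ∧
      |s.firstGap i - (w + (if n = 1 then 1 / 2 else 9 / 2) * ((t - τ) / 4 ^ n))| ≤
        2 * (e * (1 + t)) := by
  obtain ⟨w, hw, hone, hne, hpos⟩ := (B.departing rfl).head
  refine ⟨w, hw, hone, hne, ?_⟩
  have hahead := B.ahead.pos
  have h2 : (2 : ℝ) ^ (n + n + 1) = 2 * 4 ^ n := by rw [pow_succ', pow_add, ← mul_pow]; norm_num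
  have hspeed : (t - τ) * pulseSpeed i i n - (t - τ) * bounceSpeed (n + n) =
      (if n = 1 then 1 / 2 else 9 / 2) * ((t - τ) / 4 ^ n) := by
    rw [pulseSpeed, if_pos rfl, bounceSpeed, h2]
    split_ifs with h1
    · rw [h1]
      ring
    · ring
  rw [Snapshot.departure, if_neg hn.ne', add_zero] at hahead
  rw [← hspeed, Snapshot.firstGap]
  rw [abs_le] at hpos hahead ⊢
  constructor <;> linarith

end Bouncing

/-- The snapshot `s` reached from `s₀` after all collisions: it is again almost as well prepared
as `s₀`.  For `n = 1` a gap can be as small as `3 / 8`, and `11 / 16 * ρ⁻¹ < 3 / 8`. -/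
structure Snapshot.Final (n p : ℕ) (ρ : ℝ) (s₀ s : Snapshot) : Prop where
  apex : ∀ i, (s₀ (.arm i)).pos 0 ≤ (s (.arm i)).pos 0
  gap : ∀ o, ∀ k < o.len n p, 11 / 16 * ρ⁻¹ ≤ (s o).pos (k + 1) - (s o).pos k
  ratio : ∃ i, s.firstGap i ≤ 2 / 3 * s.firstGap !i

namespace Bouncing

variable {n p : ℕ} {ρ κ e e' t τ : ℝ} {s₀ s : Snapshot} {i : Bool}

lemma apex_add_inv_le (B : Bouncing n p ρ s₀ e t s i (fun _ => n) τ i)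
    (A : Admissible n ρ κ e e' t) (h₀ : s₀.Spaced n p ρ) (hτ : τ ≤ t) (j : Bool) :
    (s₀ (.arm j)).pos 0 + ρ⁻¹ ≤ (s (.arm j)).pos 0 + e * (1 + t) := by
  refine (h₀.apex_add_inv_le A.inv_pos.le A.pos le_rfl).trans ?_
  rcases Bool.eq_or_eq_not j i with rfl | rfl
  · have hahead := (abs_le.1 B.ahead.pos).1
    have := mul_nonneg (sub_nonneg.2 hτ) (bounceSpeed_pos (n + n)).le
    rw [Snapshot.departure, if_neg A.pos.ne', add_zero] at hahead
    linarith
  · linarith [(abs_le.1 B.behind.pos).1]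

lemma final_ratio (B : Bouncing n p ρ s₀ e t s i (fun _ => n) τ i)
    (A : Admissible n ρ κ e e' t) (ht : p + 1 + 4 ^ n ≤ t) :
    ∃ j, s.firstGap j ≤ 2 / 3 * s.firstGap !j := by
  have hle := A.le_mul
  have hsmall := A.mul_lt_inv
  have hinv := A.inv_le
  have hdelay := B.le_delay ht
  have hnot := abs_le.1 B.abs_firstGap_not_sub_le
  obtain ⟨w, -, hone, hne, hgap⟩ := B.exists_abs_firstGap_sub_le A.pos
  rw [abs_le] at hgap
  by_cases h1 : n = 1
  · have := hone h1
    subst h1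
    rw [if_pos rfl] at hgap
    exact ⟨i, by linarith⟩
  · have := hne h1
    rw [if_neg h1] at hgap
    refine ⟨!i, ?_⟩
    rw [Bool.not_not]
    linarith

lemma final_gap_arm (B : Bouncing n p ρ s₀ e t s i (fun _ => n) τ i)
    (A : Admissible n ρ κ e e' t) (ht : p + 1 + 4 ^ n ≤ t) (j : Bool) {k : ℕ} (hk : k < n) :
    11 / 16 * ρ⁻¹ ≤ (s (.arm j)).pos (k + 1) - (s (.arm j)).pos k := by
  have hle := A.le_mul
  have hsmall := A.mul_lt_inv
  have hinv := A.inv_le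
  have hdelay := B.le_delay ht
  have hthird : 1 / 3 ≤ (t - τ) / 4 ^ n :=
    le_trans (le_add_of_nonneg_right (div_nonneg (by linarith) (by positivity))) hdelay
  rcases Nat.eq_zero_or_pos k with rfl | hk0
  · rcases Bool.eq_or_eq_not j i with rfl | rfl
    · obtain ⟨w, hw, -, -, hgap⟩ := B.exists_abs_firstGap_sub_le A.pos
      have := (abs_le.1 hgap).1
      unfold Snapshot.firstGap at this
      by_cases h1 : n = 1
      · subst h1
        rw [if_pos rfl] at this
        linarith
      · rw [if_neg h1] at this
        linarith
    · have := (abs_le.1 B.abs_firstGap_not_sub_le).1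
      unfold Snapshot.firstGap at this
      linarith
  · have := (B.departing rfl).opened j k hk0 hk
    rw [show (t - τ) * (2 / 4 ^ n) = 2 * ((t - τ) / 4 ^ n) by ring] at this
    linarith

end Bouncing

lemma Relay.final {n p r : ℕ} {ρ κ e e' t τ : ℝ} {s₀ s : Snapshot} {lead : Bool}
    {g : Bool → ℕ → ℕ} (H : Relay n p ρ s₀ e t s lead r g τ) (A : Admissible n ρ κ e e' t)
    (h₀ : s₀.Spaced n p ρ) (hs : s.Separated n p κ) (hl : s.Balanced) (hκ : n * κ ≤ e)
    (ht : p + 1 + 4 ^ n ≤ t) : s₀.Final n p ρ s := by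
  obtain ⟨hr, -, B⟩ := H.completed A h₀ hs hl hκ (by linarith)
  have hsmall := A.mul_lt_inv
  have hX := A.mul_nonneg
  have hapex := B.apex_add_inv_le A h₀ H.le
  refine ⟨fun i => by linarith [hapex i], ?_, B.final_ratio A ht⟩
  rintro (j | _) k hk
  · exact B.final_gap_arm A ht j hk
  · have hnext := abs_le.1 (H.train.after (k + 1) (by omega) hk).pos
    rw [Nat.add_sub_cancel] at hnext
    rcases Nat.eq_zero_or_pos k with rfl | hk0
    · have := hapex !true
      rw [hl.pos true]
      rw [h₀.pos true] at hnext
      linarith [hapex true]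
    · have hprev := abs_le.1 (H.train.after k (by omega) hk.le).pos
      have hgap := h₀.le_gap .train (k - 1) (by have : k < p := hk; exact (k.sub_le 1).trans_lt hk)
      rw [Nat.sub_add_cancel hk0] at hgap
      linarith

/-! ### The whole evolution -/

section RealInduction

open Set Filter Topology

lemma forall_mem_Icc_of_left_right {α : Type*} [ConditionallyCompleteLinearOrder α]
    [TopologicalSpace α] [OrderTopology α] {a b : α} {P : α → Prop} (ha : P a)
    (right : ∀ t ∈ Ico a b, P t → ∀ᶠ t' in 𝓝[>] t, P t')
    (left : ∀ t ∈ Ioc a b, (∀ s ∈ Ico a t, P s) → P t) : ∀ t ∈ Icc a b, P t := by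
  by_contra! ⟨t₁, ht₁, hPt₁⟩
  set B : Set α := {t ∈ Icc a b | ¬ P t}
  have hne : B.Nonempty := ⟨t₁, ht₁, hPt₁⟩
  have hbdd : BddBelow B := ⟨a, fun t ht => ht.1.1⟩
  have hac : a ≤ sInf B := le_csInf hne fun t ht => ht.1.1
  have hcb : sInf B ≤ b := (csInf_le hbdd ⟨ht₁, hPt₁⟩).trans ht₁.2
  have hPc : P (sInf B) := by
    rcases hac.eq_or_lt with h | h
    · rwa [← h]
    · refine left _ ⟨h, hcb⟩ fun s hs => ?_
      by_contra hP
      exact hs.2.not_ge (csInf_le hbdd ⟨⟨hs.1, hs.2.le.trans hcb⟩, hP⟩)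
  have hlt {t : α} (ht : t ∈ B) : sInf B < t :=
    (csInf_le hbdd ht).lt_of_ne fun h => ht.2 (h ▸ hPc)
  have hct₁ := hlt ⟨ht₁, hPt₁⟩
  obtain ⟨u, hu, hsub⟩ := (mem_nhdsGT_iff_exists_Ioo_subset' hct₁).1
    (right _ ⟨hac, hct₁.trans_le ht₁.2⟩ hPc)
  obtain ⟨t, ht, htu⟩ := exists_lt_of_csInf_lt hne hu
  exact ht.2 (hsub ⟨hlt ht, htu⟩)

end RealInduction

/-- Only the last ball of the train moves; if there is no train, this is the apex. -/
structure Snapshot.Launch (n p : ℕ) (κ : ℝ) (s : Snapshot) : Prop where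
  arm : ∀ i, ∀ k, 1 ≤ k → k ≤ n → |(s (.arm i)).vel k| ≤ κ
  train : ∀ k, 1 ≤ k → k < p → |(s .train).vel k| ≤ κ
  head : p ≠ 0 → |(s .train).vel p - -1| ≤ κ ∧ ∀ i, |(s (.arm i)).vel 0| ≤ κ
  single : p = 0 → ∀ i, |(s (.arm i)).vel 0 - 1 / 2| ≤ κ

/-- The motion of the reduced coordinates during the time interval `[0, T]`: `S t` and `L t` are the
snapshots with the right and the left velocities, and `C` contains the times of the collisions. -/
structure Evolution (n p : ℕ) (κ T : ℝ) (C : Set ℝ) (S L : ℝ → Snapshot) : Prop where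
  right : ∀ t ∈ Set.Ico 0 T, ∀ᶠ t' in nhdsWithin t (Set.Ioi t), S t' = (S t).move (t' - t)
  left : ∀ t ∈ Set.Ioc 0 T, ∃ s ∈ Set.Ico 0 t, L t = (S s).move (t - s)
  balanced_left : ∀ t ∈ Set.Ioc 0 T, (L t).Balanced
  balanced : ∀ t ∈ Set.Icc 0 T, (S t).Balanced
  separated : ∀ t ∈ Set.Icc 0 T, (S t).Separated n p κ
  jump : ∀ t ∈ Set.Ioc 0 T, S t = L t ∨ (t ∈ C ∧ ∃ o k, Snapshot.Hit n p κ (L t) (S t) o k)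

/-- The initial error `K * κ` is so small that it remains small if each of the at most
`p + 2 * n ^ 2` collisions before time `T` multiplies it by `K`. -/
structure Tolerance (n p : ℕ) (ρ κ K T : ℝ) : Prop where
  pos : 0 < n
  two_le : 2 ≤ ρ
  nonneg : 0 ≤ κ
  growth : 100 * 4 ^ n * (1 + T) ≤ K
  small : K ^ (p + 2 * (n * n) + 2) * κ ≤ ρ⁻¹

namespace Tolerance

variable {n p c : ℕ} {ρ κ K T t : ℝ}

lemma pow_le (H : Tolerance n p ρ κ K T) (hT : 0 ≤ T) : 4 ^ n ≤ K := by
  have : (0 : ℝ) < 4 ^ n := by positivity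
  nlinarith [H.growth]

lemma one_le (H : Tolerance n p ρ κ K T) (hT : 0 ≤ T) : 1 ≤ K :=
  (one_le_pow₀ (by norm_num)).trans (H.pow_le hT)

lemma admissible (H : Tolerance n p ρ κ K T) (ht : t ∈ Set.Icc 0 T)
    (hc : c ≤ p + 2 * (n * n)) :
    Admissible n ρ κ (K ^ (c + 1) * κ) (K ^ (c + 1 + 1) * κ) t := by
  have hK := H.one_le (ht.1.trans ht.2)
  have hκ := H.nonneg
  have hgrow : 100 * 4 ^ n * (K ^ (c + 1) * κ * (1 + t)) ≤ K ^ (c + 1 + 1) * κ :=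
    calc 100 * 4 ^ n * (K ^ (c + 1) * κ * (1 + t))
        = 100 * 4 ^ n * (1 + t) * (K ^ (c + 1) * κ) := by ring
      _ ≤ K * (K ^ (c + 1) * κ) := by
          gcongr
          exact le_trans (by gcongr; exact ht.2) H.growth
      _ = K ^ (c + 1 + 1) * κ := by ring
  refine ⟨H.pos, H.two_le, hκ, le_mul_of_one_le_left hκ (one_le_pow₀ hK), ht.1,
    hgrow.trans (le_trans ?_ H.small), hgrow⟩
  exact mul_le_mul_of_nonneg_right (pow_le_pow_right₀ hK (by omega)) hκ

lemma mul_le (H : Tolerance n p ρ κ K T) (hT : 0 ≤ T) : n * κ ≤ K ^ (c + 1) * κ := by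
  have hn : (n : ℝ) ≤ 4 ^ n := by exact_mod_cast (Nat.lt_pow_self (by norm_num)).le
  exact mul_le_mul_of_nonneg_right
    ((hn.trans (H.pow_le hT)).trans (le_self_pow₀ (H.one_le hT) c.succ_ne_zero)) H.nonneg

end Tolerance

/-- The snapshot `s` at time `t` is a state of the relay all of whose collisions have been recorded
in a set of times in `(0, u]`. -/
def Progress (n p : ℕ) (ρ κ K : ℝ) (C : Set ℝ) (s₀ : Snapshot) (u t : ℝ) (s : Snapshot) : Prop :=
  ∃ lead r g τ, ∃ F : Finset ℝ, ↑F ⊆ C ∩ Set.Ioc 0 u ∧ F.card = Relay.count n p r g ∧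
    Relay n p ρ s₀ (K ^ (F.card + 1) * κ) t s lead r g τ

lemma Relay.of_launch {n p : ℕ} {ρ κ e : ℝ} {s : Snapshot} (hs : s.Launch n p κ) (he : κ ≤ e)
    (lead : Bool) : Relay n p ρ s e 0 s lead p (fun _ _ => 0) 0 := by
  have near {R : Row} {k : ℕ} {v : ℝ} (h : |R.vel k - v| ≤ κ) : R.Near k e 0 (R.pos k) v :=
    ⟨h.trans he, by simpa using (abs_nonneg _).trans (h.trans he)⟩
  refine ⟨le_rfl, ⟨le_rfl, fun hp => ?_, fun k hk hkp => ?_, fun k hpk hkp => by omega⟩,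
    fun i => ⟨⟨by simp, by simp⟩, by simp, fun k hk _ => ?_⟩, ?_⟩
  · rw [sub_zero]
    exact near (hs.head hp).1
  · exact near (by simpa using hs.train k hk hkp)
  · exact near (by simpa using hs.arm i (k + 1) (by omega) hk)
  · rcases eq_or_ne p 0 with rfl | hp
    · have h_nonneg : 0 ≤ e := (abs_nonneg _).trans ((hs.single rfl true).trans he)
      refine .start rfl (fun _ => rfl) (by simpa using h_nonneg) fun i => ?_
      rw [sub_zero, zero_mul, add_zero]
      exact near (hs.single rfl i)
    · exact .idle hp (fun _ => rfl) fun i => near (by simpa using (hs.head hp).2 i)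

namespace Progress

variable {n p : ℕ} {ρ κ K u u' t t' T : ℝ} {C : Set ℝ} {s₀ s l : Snapshot}

lemma start (hκ : 0 ≤ κ) (hK : 1 ≤ K) (hs : s.Launch n p κ) : Progress n p ρ κ K C s 0 0 s := by
  refine ⟨true, p, fun _ _ => 0, 0, ∅, by simp, by simp [Relay.count], ?_⟩
  exact .of_launch hs (le_mul_of_one_le_left hκ (one_le_pow₀ hK)) true

lemma move (H : Progress n p ρ κ K C s₀ u t s) (hn : 0 < n) (ht : t ≤ t') :
    Progress n p ρ κ K C s₀ u t' (s.move (t' - t)) := by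
  obtain ⟨lead, r, g, τ, F, hF, hcard, hrelay⟩ := H
  exact ⟨lead, r, g, τ, F, hF, hcard, hrelay.move hn ht⟩

lemma mono (H : Progress n p ρ κ K C s₀ u t s) (hu : u ≤ u') :
    Progress n p ρ κ K C s₀ u' t s := by
  obtain ⟨lead, r, g, τ, F, hF, hcard, hrelay⟩ := H
  exact ⟨lead, r, g, τ, F,
    hF.trans (Set.inter_subset_inter_right _ (Set.Ioc_subset_Ioc_right hu)), hcard, hrelay⟩

lemma hit {o : Ray} {k : ℕ} (H : Progress n p ρ κ K C s₀ u t l) (hut : u < t)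
    (ht : t ∈ Set.Ioc 0 T) (htC : t ∈ C) (hK : Tolerance n p ρ κ K T) (h₀ : s₀.Spaced n p ρ)
    (hl : l.Balanced) (hs : s.Separated n p κ) (J : Snapshot.Hit n p κ l s o k) :
    Progress n p ρ κ K C s₀ t t s := by
  obtain ⟨lead, r, g, τ, F, hF, hcard, hrelay⟩ := H
  have htF : t ∉ F := fun h => (hF h).2.2.not_gt hut
  obtain ⟨lead', r', g', τ', hcount, hrelay'⟩ := hrelay.hit
    (hK.admissible (Set.Ioc_subset_Icc_self ht) (hcard.trans_le hrelay.count_le)) h₀ hl hs J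
  refine ⟨lead', r', g', τ', insert t F, ?_, ?_, ?_⟩
  · rw [Finset.coe_insert]
    exact Set.insert_subset ⟨htC, ht.1, le_rfl⟩
      (hF.trans (Set.inter_subset_inter_right _ (Set.Ioc_subset_Ioc_right hut.le)))
  · rw [Finset.card_insert_of_notMem htF, hcard, hcount]
  · rwa [Finset.card_insert_of_notMem htF]

end Progress

namespace Evolution

variable {n p : ℕ} {ρ κ K T : ℝ} {C : Set ℝ} {S L : ℝ → Snapshot}

lemma progress (E : Evolution n p κ T C S L) (hK : Tolerance n p ρ κ K T)
    (h₀ : (S 0).Spaced n p ρ) (h₁ : (S 0).Launch n p κ) (hT : 0 ≤ T) :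
    ∀ t ∈ Set.Icc 0 T, Progress n p ρ κ K C (S 0) t t (S t) := by
  refine forall_mem_Icc_of_left_right (.start hK.nonneg (hK.one_le hT) h₁)
    (fun t ht H => ?_) fun t ht H => ?_
  · filter_upwards [E.right t ht, self_mem_nhdsWithin] with t' hmove htt'
    rw [hmove]
    exact (H.move hK.pos (le_of_lt htt')).mono (le_of_lt htt')
  · obtain ⟨s, hs, hL⟩ := E.left t ht
    have HL := (H s hs).move hK.pos hs.2.le
    rw [← hL] at HL
    rcases E.jump t ht with hS | ⟨hC, o, k, J⟩
    · rw [hS]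
      exact HL.mono hs.2.le
    · exact HL.hit hs.2 ht hC hK h₀ (E.balanced_left t ht)
        (E.separated t (Set.Ioc_subset_Icc_self ht)) J

lemma outcome (E : Evolution n p κ T C S L) (hK : Tolerance n p ρ κ K T)
    (h₀ : (S 0).Spaced n p ρ) (h₁ : (S 0).Launch n p κ) (hT : p + 1 + 4 ^ n ≤ T) :
    (∃ F : Finset ℝ, ↑F ⊆ C ∩ Set.Ioo 0 T ∧ F.card = p + n * (n + 1)) ∧
      (S 0).Final n p ρ (S T) := by
  have h4 : (1 : ℝ) ≤ 4 ^ n := one_le_pow₀ (by norm_num)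
  have hT0 : 0 ≤ T := by linarith
  have hprogress := E.progress hK h₀ h₁ hT0
  have hbefore : T - 1 / 4 ∈ Set.Icc 0 T := ⟨by linarith, by linarith⟩
  have hend : T ∈ Set.Icc 0 T := ⟨hT0, le_rfl⟩
  constructor
  · obtain ⟨lead, r, g, τ, F, hF, hcard, hrelay⟩ := hprogress _ hbefore
    obtain ⟨hr, hfull, -⟩ := hrelay.completed
      (hK.admissible hbefore (hcard.trans_le hrelay.count_le)) h₀ (E.separated _ hbefore)
      (E.balanced _ hbefore) (hK.mul_le hT0) (by linarith)
    refine ⟨F, hF.trans (Set.inter_subset_inter_right _ fun x hx => ⟨hx.1, ?_⟩), ?_⟩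
    · linarith [hx.2]
    · rw [hcard, hrelay.count_of_completed hr hfull]
  · obtain ⟨lead, r, g, τ, F, -, hcard, hrelay⟩ := hprogress T hend
    exact hrelay.final (hK.admissible hend (hcard.trans_le hrelay.count_le)) h₀
      (E.separated T hend) (E.balanced T hend) (hK.mul_le hT0) hT

end Evolution

/-! ### Ball systems -/

lemma norm_sub_lt_three {E : Type*} [SeminormedAddCommGroup E] {X Y A B : E} {η : ℝ}
    (hη : η < 1 / 2) (hX : ‖X - A‖ ≤ η) (hY : ‖Y - B‖ ≤ η) (h : ‖X - Y‖ = 2) : ‖A - B‖ < 3 := by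
  rw [← dist_eq_norm] at *
  linarith [dist_triangle4 A X Y B, dist_comm A X]

section InnerProductSpace

variable {E : Type*} [NormedAddCommGroup E] [InnerProductSpace ℝ E]

lemma norm_sq_add_norm_sq_of_reflection {u : E} (hu : ‖u‖ = 1) (v v' : E) :
    ‖v - ⟪v - v', u⟫ • u‖ ^ 2 + ‖v' + ⟪v - v', u⟫ • u‖ ^ 2 = ‖v‖ ^ 2 + ‖v'‖ ^ 2 := by
  rw [norm_sub_sq_real, norm_add_sq_real, inner_smul_right, inner_smul_right, norm_smul, hu,
    mul_one, Real.norm_eq_abs, sq_abs, inner_sub_left]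
  ring

lemma abs_inner_mul_inner_sub_le {u w w' v : E} {η M : ℝ} (hu : ‖u‖ = 1) (hw : ‖w‖ = 1)
    (hw' : ‖w'‖ = 1) (h : ‖u - w‖ ≤ η) (hv : ‖v‖ ≤ M) :
    |⟪v, u⟫ * ⟪w', u⟫ - ⟪v, w⟫ * ⟪w', w⟫| ≤ 2 * M * η := by
  have hM : 0 ≤ M := (norm_nonneg v).trans hv
  have hη : 0 ≤ η := (norm_nonneg _).trans h
  have first : |⟪v, u⟫ * ⟪w', u - w⟫| ≤ M * η := by
    rw [abs_mul]
    exact mul_le_mul ((abs_real_inner_le_norm v u).trans (by rwa [hu, mul_one]))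
      ((abs_real_inner_le_norm w' (u - w)).trans (by rwa [hw', one_mul])) (abs_nonneg _) hM
  have second : |⟪v, u - w⟫ * ⟪w', w⟫| ≤ M * η := by
    rw [abs_mul, ← mul_one (M * η)]
    exact mul_le_mul ((abs_real_inner_le_norm v (u - w)).trans (by gcongr))
      ((abs_real_inner_le_norm w' w).trans_eq (by rw [hw, hw', one_mul])) (abs_nonneg _)
      (by positivity)
  calc |⟪v, u⟫ * ⟪w', u⟫ - ⟪v, w⟫ * ⟪w', w⟫|
      = |⟪v, u⟫ * ⟪w', u - w⟫ + ⟪v, u - w⟫ * ⟪w', w⟫| := by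
        rw [inner_sub_right, inner_sub_right]; congr 1; ring
    _ ≤ 2 * M * η := (abs_add_le _ _).trans (by linarith)

lemma neg_sq_le_inner_sub_two {w x : E} {η : ℝ} (hw : ‖w‖ = 1) (hx : 2 ≤ ‖x‖)
    (h : ‖x - (2 : ℝ) • w‖ ≤ 2 * η) : -η ^ 2 ≤ ⟪w, x⟫ - 2 := by
  have h1 : ‖x - (2 : ℝ) • w‖ ^ 2 ≤ (2 * η) ^ 2 := by gcongr
  have h2 : (2 : ℝ) ^ 2 ≤ ‖x‖ ^ 2 := by gcongr
  rw [norm_sub_sq_real, inner_smul_right, norm_smul, hw, real_inner_comm] at h1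
  norm_num at h1 h2
  nlinarith

lemma lt_add_two_of_norm_smul_sub_smul_lt {w : E} {a b : ℕ} (hw : ‖w‖ = 1)
    (h : ‖(2 * a : ℝ) • w - (2 * b : ℝ) • w‖ < 3) : a < b + 2 := by
  rw [← sub_smul, norm_smul, hw, mul_one, Real.norm_eq_abs, abs_lt] at h
  exact_mod_cast (by linarith : (a : ℝ) < b + 2)

lemma three_le_norm_smul_sub_smul {w w' : E} {a b : ℕ} (hw : ‖w‖ = 1) (hw' : ‖w'‖ = 1)
    (hww : ⟪w, w'⟫ = -(1 / 2)) (ha : 1 ≤ a) (hb : 1 ≤ b) :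
    3 ≤ ‖(2 * a : ℝ) • w - (2 * b : ℝ) • w'‖ := by
  refine (sq_le_sq₀ (by norm_num) (norm_nonneg _)).1 ?_
  rw [norm_sub_sq_real, inner_smul_right, real_inner_smul_left, norm_smul, norm_smul, hw, hw', hww,
    Real.norm_eq_abs, Real.norm_eq_abs, mul_one, mul_one, sq_abs, sq_abs]
  have ha' : (1 : ℝ) ≤ a := by exact_mod_cast ha
  have hb' : (1 : ℝ) ≤ b := by exact_mod_cast hb
  nlinarith

end InnerProductSpace

namespace BallSystem

open Filter Set
open scoped Topology

variable {ι : Type} {d : ℕ} {S : BallSystem ι d Set.univ}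

lemma vr_eq_of_eqOn {i : ι} {s b c : ℝ} {y v : EuclideanSpace ℝ (Fin d)} (hb : s < b)
    (h : ∀ r ∈ Ico s b, S.x i r = y + (r - c) • v) : S.vr i s = v := by
  obtain ⟨ε, hε, hlin⟩ := S.right_lin i s (mem_univ s)
  obtain ⟨r, hr, hrb⟩ : ∃ r ∈ Ioo s b, r ≤ s + ε :=
    ⟨min ((s + b) / 2) (s + ε), ⟨lt_min (by linarith) (by linarith),
      (min_le_left _ _).trans_lt (by linarith)⟩, min_le_right _ _⟩
  have hsr := hlin r ⟨⟨hr.1.le, hrb⟩, mem_univ r⟩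
  rw [h r ⟨hr.1.le, hr.2⟩, h s ⟨le_rfl, hb⟩, add_assoc, add_right_inj, ← sub_eq_iff_eq_add',
    ← sub_smul, sub_sub_sub_cancel_right] at hsr
  exact (smul_right_injective _ (sub_ne_zero.2 hr.1.ne') hsr).symm

variable (S) in
lemma eventually_right [Finite ι] (t : ℝ) :
    ∀ᶠ s in 𝓝[>] t, ∀ i, S.x i s = S.x i t + (s - t) • S.vr i t ∧ S.vr i s = S.vr i t := by
  refine eventually_all.2 fun i => ?_
  obtain ⟨ε, hε, hlin⟩ := S.right_lin i t (mem_univ t)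
  filter_upwards [Ioo_mem_nhdsGT (show t < t + ε by linarith)] with s hs
  exact ⟨hlin s ⟨⟨hs.1.le, hs.2.le⟩, mem_univ s⟩, vr_eq_of_eqOn hs.2 fun r hr =>
    hlin r ⟨⟨hs.1.le.trans hr.1, hr.2.le⟩, mem_univ r⟩⟩

variable (S) in
lemma eventually_left [Finite ι] (t : ℝ) :
    ∀ᶠ s in 𝓝[<] t, ∀ i, S.x i s = S.x i t + (s - t) • S.vl i t ∧ S.vr i s = S.vl i t := by
  refine eventually_all.2 fun i => ?_
  obtain ⟨ε, hε, hlin⟩ := S.left_lin i t (mem_univ t)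
  filter_upwards [Ioo_mem_nhdsLT (show t - ε < t by linarith)] with s hs
  exact ⟨hlin s ⟨⟨hs.1.le, hs.2.le⟩, mem_univ s⟩, vr_eq_of_eqOn hs.2 fun r hr =>
    hlin r ⟨⟨hs.1.le.trans hr.1, hr.2.le⟩, mem_univ r⟩⟩

variable (S) in
/-- The unit vector from the center of ball `j` to that of ball `i`, if these are in contact. -/
noncomputable def normal (t : ℝ) (i j : ι) : EuclideanSpace ℝ (Fin d) :=
  (2⁻¹ : ℝ) • (S.x i t - S.x j t)

variable (S) in
/-- The momentum handed over from ball `i` to ball `j` when they collide at time `t`. -/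
noncomputable def impulse (t : ℝ) (i j : ι) : EuclideanSpace ℝ (Fin d) :=
  ⟪S.vl i t - S.vl j t, S.normal t i j⟫ • S.normal t i j

lemma impulse_swap (t : ℝ) (i j : ι) : S.impulse t j i = -S.impulse t i j := by
  rw [impulse, impulse, normal, normal, ← neg_sub (S.x i t), ← neg_sub (S.vl i t), smul_neg,
    inner_neg_neg, smul_neg]

variable (S) in
/-- The balls `i` and `j`, and no others, collide at time `t`. -/
structure Bounce (t : ℝ) (i j : ι) : Prop where
  ne : i ≠ j
  contact : ‖S.x i t - S.x j t‖ = 2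
  change_left : S.vr i t ≠ S.vl i t
  change_right : S.vr j t ≠ S.vl j t
  other : ∀ k, k ≠ i → k ≠ j → S.vr k t = S.vl k t
  vr_left : S.vr i t = S.vl i t - S.impulse t i j
  vr_right : S.vr j t = S.vl j t + S.impulse t i j

variable (S) in
lemma eq_or_bounce (t : ℝ) : (∀ i, S.vr i t = S.vl i t) ∨ ∃ i j, S.Bounce t i j := by
  by_cases h : ∀ i, S.vr i t = S.vl i t
  · exact .inl h
  · push Not at h
    obtain ⟨i, hi⟩ := h
    obtain ⟨j, hji, contact, hj, -, other, vr_i, vr_j⟩ := S.collision_rule i t (mem_univ t)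
      ⟨t - 1, mem_univ _, by linarith⟩ hi
    exact .inr ⟨i, j, hji.symm, contact, hi, hj, other, vr_i, vr_j⟩

namespace Bounce

variable {t η Λ : ℝ} {i j : ι} {w w' : EuclideanSpace ℝ (Fin d)}

lemma symm (B : S.Bounce t i j) : S.Bounce t j i where
  ne := B.ne.symm
  contact := by rw [norm_sub_rev, B.contact]
  change_left := B.change_right
  change_right := B.change_left
  other k hj hi := B.other k hi hj
  vr_left := by rw [impulse_swap, sub_neg_eq_add, B.vr_right]
  vr_right := by rw [impulse_swap, ← sub_eq_add_neg, B.vr_left]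

lemma mem_collisions [DecidableEq ι] (B : S.Bounce t i j) :
    (t, ({i, j} : Finset ι)) ∈ S.collisions :=
  ⟨mem_univ t, ⟨t - 1, mem_univ _, by simp⟩, i, j, B.ne, rfl, B.contact, B.change_left,
    B.change_right⟩

lemma norm_normal (B : S.Bounce t i j) : ‖S.normal t i j‖ = 1 := by
  rw [normal, norm_smul, B.contact]; norm_num

lemma approach [Finite ι] (B : S.Bounce t i j) :
    ⟪S.vl i t - S.vl j t, S.x i t - S.x j t⟫ ≤ 0 := by
  set x := S.x i t - S.x j t with hx
  set v := S.vl i t - S.vl j t with hv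
  have quadratic : ∀ᶠ s in 𝓝[<] t, 2 * ⟪v, x⟫ ≤ (t - s) * ‖v‖ ^ 2 := by
    filter_upwards [S.eventually_left t, self_mem_nhdsWithin] with s hs hst
    have hdist := S.dist_ge i j B.ne s (mem_univ s)
    rw [(hs i).1, (hs j).1, show S.x i t + (s - t) • S.vl i t - (S.x j t + (s - t) • S.vl j t) =
      x - (t - s) • v by rw [hx, hv]; module] at hdist
    have hsq : (2 : ℝ) ^ 2 ≤ ‖x - (t - s) • v‖ ^ 2 := by gcongr
    rw [norm_sub_sq_real, B.contact, inner_smul_right, norm_smul, real_inner_comm, mul_pow,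
      Real.norm_eq_abs, sq_abs] at hsq
    refine le_of_mul_le_mul_left ?_ (sub_pos.2 hst)
    linarith
  have hlim : Tendsto (fun s => (t - s) * ‖v‖ ^ 2) (𝓝[<] t) (𝓝 0) := by
    refine tendsto_nhdsWithin_of_tendsto_nhds (Continuous.tendsto' (by fun_prop) _ _ (by simp))
  linarith [ge_of_tendsto hlim quadratic]

lemma norm_vr_sq_add_norm_vr_sq (B : S.Bounce t i j) :
    ‖S.vr i t‖ ^ 2 + ‖S.vr j t‖ ^ 2 = ‖S.vl i t‖ ^ 2 + ‖S.vl j t‖ ^ 2 := by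
  rw [B.vr_left, B.vr_right]
  exact norm_sq_add_norm_sq_of_reflection B.norm_normal _ _

lemma abs_inner_sub_two_le (B : S.Bounce t i j) (hw : ‖w‖ = 1)
    (h : ‖S.x i t - S.x j t - (2 : ℝ) • w‖ ≤ 2 * η) :
    |⟪w, S.x i t - S.x j t⟫ - 2| ≤ η ^ 2 := by
  have hle := real_inner_le_norm w (S.x i t - S.x j t)
  rw [hw, B.contact] at hle
  exact abs_le.2 ⟨neg_sq_le_inner_sub_two hw B.contact.ge h, by nlinarith⟩

lemma norm_normal_sub_le (h : ‖S.x i t - S.x j t - (2 : ℝ) • w‖ ≤ 2 * η) :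
    ‖S.normal t i j - w‖ ≤ η := by
  rw [normal, show (2⁻¹ : ℝ) • (S.x i t - S.x j t) - w =
    (2⁻¹ : ℝ) • (S.x i t - S.x j t - (2 : ℝ) • w) by module, norm_smul, Real.norm_eq_abs,
    abs_of_pos (by norm_num)]
  linarith

lemma norm_vl_sub_le (hV : ∀ k, ‖S.vl k t‖ ≤ Λ) (i j : ι) :
    ‖S.vl i t - S.vl j t‖ ≤ 2 * Λ :=
  (norm_sub_le _ _).trans (by linarith [hV i, hV j])

lemma inner_vl_sub_le [Finite ι] (B : S.Bounce t i j)
    (h : ‖S.x i t - S.x j t - (2 : ℝ) • w‖ ≤ 2 * η) (hV : ∀ k, ‖S.vl k t‖ ≤ Λ) :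
    ⟪w, S.vl i t - S.vl j t⟫ ≤ 2 * Λ * η := by
  have hnormal : ⟪S.vl i t - S.vl j t, S.normal t i j⟫ ≤ 0 := by
    rw [normal, inner_smul_right]
    linarith [B.approach]
  have herr : |⟪S.vl i t - S.vl j t, S.normal t i j - w⟫| ≤ 2 * Λ * η :=
    (abs_real_inner_le_norm _ _).trans (mul_le_mul (norm_vl_sub_le hV i j) (norm_normal_sub_le h)
      (norm_nonneg _) (by linarith [norm_nonneg (S.vl i t), hV i]))
  rw [inner_sub_right] at herr
  rw [real_inner_comm]
  linarith [(abs_le.1 herr).1]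

lemma abs_inner_impulse_sub_le (B : S.Bounce t i j) (hw : ‖w‖ = 1) (hw' : ‖w'‖ = 1)
    (h : ‖S.x i t - S.x j t - (2 : ℝ) • w‖ ≤ 2 * η) (hV : ∀ k, ‖S.vl k t‖ ≤ Λ) :
    |⟪w', S.impulse t i j⟫ - ⟪w, S.vl i t - S.vl j t⟫ * ⟪w', w⟫| ≤ 4 * Λ * η := by
  rw [impulse, inner_smul_right, real_inner_comm _ w]
  exact (abs_inner_mul_inner_sub_le B.norm_normal hw hw' (norm_normal_sub_le h)
    (norm_vl_sub_le hV i j)).trans_eq (by ring)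

end Bounce

section Energy

variable [Fintype ι]

variable (S) in
lemma sum_norm_vr_sq (t : ℝ) : ∑ k, ‖S.vr k t‖ ^ 2 = ∑ k, ‖S.vl k t‖ ^ 2 := by
  classical
  rcases S.eq_or_bounce t with h | ⟨i, j, B⟩
  · simp only [h]
  · rw [← Finset.sum_add_sum_compl {i, j}, ← Finset.sum_add_sum_compl {i, j},
      Finset.sum_pair B.ne, Finset.sum_pair B.ne, B.norm_vr_sq_add_norm_vr_sq]
    congr 1
    refine Finset.sum_congr rfl fun k hk => ?_
    simp only [Finset.mem_compl, Finset.mem_insert, Finset.mem_singleton, not_or] at hk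
    rw [B.other k hk.1 hk.2]

variable (S) in
lemma norm_vr_le (i : ι) (t : ℝ) : ‖S.vr i t‖ ≤ S.speedNorm t :=
  Real.le_sqrt_of_sq_le (Finset.single_le_sum (f := fun k => ‖S.vr k t‖ ^ 2)
    (fun _ _ => by positivity) (Finset.mem_univ i))

variable (S) in
lemma norm_vl_le (i : ι) (t : ℝ) : ‖S.vl i t‖ ≤ S.speedNorm t := by
  refine Real.le_sqrt_of_sq_le ?_
  rw [S.sum_norm_vr_sq]
  exact Finset.single_le_sum (f := fun k => ‖S.vl k t‖ ^ 2) (fun _ _ => by positivity)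
    (Finset.mem_univ i)

variable (S) in
lemma eventually_speedNorm_right (t : ℝ) : ∀ᶠ s in 𝓝[>] t, S.speedNorm s = S.speedNorm t := by
  filter_upwards [S.eventually_right t] with s hs
  simp only [speedNorm, (hs _).2]

variable (S) in
lemma eventually_speedNorm_left (t : ℝ) : ∀ᶠ s in 𝓝[<] t, S.speedNorm s = S.speedNorm t := by
  filter_upwards [S.eventually_left t] with s hs
  rw [speedNorm, speedNorm, S.sum_norm_vr_sq t]
  simp only [(hs _).2]

lemma speedNorm_eq_and_norm_sub_le {t₀ t : ℝ} (ht : t₀ ≤ t) :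
    S.speedNorm t = S.speedNorm t₀ ∧
      ∀ i, ‖S.x i t - S.x i t₀‖ ≤ S.speedNorm t₀ * (t - t₀) := by
  have step : ∀ {y z v : EuclideanSpace ℝ (Fin d)} {r Λ a : ℝ}, 0 ≤ r → ‖v‖ ≤ Λ →
      ‖y - z‖ ≤ Λ * a → ‖y + r • v - z‖ ≤ Λ * (a + r) := fun {y z v r Λ a} hr hv hy => by
    rw [add_sub_right_comm]
    refine (norm_add_le _ _).trans ?_
    rw [norm_smul, Real.norm_eq_abs, abs_of_nonneg hr]
    linarith [mul_le_mul_of_nonneg_left hv hr]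
  refine forall_mem_Icc_of_left_right (a := t₀) (b := t)
    (P := fun s => S.speedNorm s = S.speedNorm t₀ ∧
      ∀ i, ‖S.x i s - S.x i t₀‖ ≤ S.speedNorm t₀ * (s - t₀)) (by simp) ?_ ?_ t ⟨ht, le_rfl⟩
  · rintro s - ⟨hE, hx⟩
    filter_upwards [S.eventually_right s, S.eventually_speedNorm_right s, self_mem_nhdsWithin]
      with r hr hEr hsr
    refine ⟨hEr.trans hE, fun i => ?_⟩
    rw [(hr i).1, ← sub_add_sub_cancel' s t₀ r]
    exact step (sub_nonneg.2 (le_of_lt hsr)) (hE ▸ S.norm_vr_le i s) (hx i)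
  · intro s hs H
    obtain ⟨r, ⟨hr, hEr⟩, hrs⟩ := ((S.eventually_left s).and (S.eventually_speedNorm_left s)
      |>.and (Ico_mem_nhdsLT hs.1)).exists
    obtain ⟨hE, hx⟩ := H r hrs
    refine ⟨hEr.symm.trans hE, fun i => ?_⟩
    have hxs : S.x i s = S.x i r + (s - r) • S.vl i s := by rw [(hr i).1]; module
    rw [hxs, ← sub_add_sub_cancel' r t₀ s]
    exact step (sub_nonneg.2 hrs.2.le) ((S.norm_vl_le i s).trans_eq (hEr.symm.trans hE)) (hx i)

end Energy

end BallSystem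

/-! ### Reduced coordinates -/

/-- An orthonormal basis `w`, `u` of a plane; completeness is expressed by Parseval's identity. -/
structure Frame {E : Type*} [NormedAddCommGroup E] [InnerProductSpace ℝ E] (w u : E) : Prop where
  norm_left : ‖w‖ = 1
  norm_right : ‖u‖ = 1
  norm_sq : ∀ x, ‖x‖ ^ 2 = ⟪w, x⟫ ^ 2 + ⟪u, x⟫ ^ 2

/-- The rows of the initial conditions: `ball o k` is the ball with index `k` of the row `o`, which
should lie close to `(2 * k) • dir o`; the unit vector `side o` is orthogonal to `dir o`.  In the
direction `dir .train` the train extends away from the apex. -/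
structure Layout (ι : Type) (d n p : ℕ) where
  ball : Ray → ℕ → ι
  dir : Ray → EuclideanSpace ℝ (Fin d)
  side : Ray → EuclideanSpace ℝ (Fin d)
  frame : ∀ o, Frame (dir o) (side o)
  inner_dir : ∀ {o o'}, o ≠ o' → ⟪dir o, dir o'⟫ = -(1 / 2)
  ball_zero : ∀ o o', ball o 0 = ball o' 0
  ball_inj : ∀ {o o' j k}, j ≤ o.len n p → k ≤ o'.len n p → ball o j = ball o' k →
    j = k ∧ (o = o' ∨ j = 0)
  cover : ∀ i, ∃ o, ∃ k ≤ o.len n p, ball o k = i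

namespace Layout

variable {ι : Type} {d n p : ℕ} (Y : Layout ι d n p)

lemma norm_dir (o : Ray) : ‖Y.dir o‖ = 1 := (Y.frame o).norm_left

lemma inner_dir_self (o : Ray) : ⟪Y.dir o, Y.dir o⟫ = (1 : ℝ) := by
  rw [real_inner_self_eq_norm_sq, Y.norm_dir, one_pow]

lemma dir_train (i : Bool) : Y.dir .train = -(Y.dir (.arm i) + Y.dir (.arm !i)) := by
  have harm : Ray.arm i ≠ .arm !i := by simp
  have htrain (j : Bool) : Ray.train ≠ .arm j := nofun
  refine eq_neg_of_add_eq_zero_left (norm_eq_zero.1 (sq_eq_zero_iff.1 ?_))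
  rw [norm_add_sq_real, norm_add_sq_real, inner_add_right, Y.norm_dir, Y.norm_dir, Y.norm_dir,
    Y.inner_dir (htrain _), Y.inner_dir (htrain _), Y.inner_dir harm]
  norm_num

end Layout

/-- Scales `ε` of the gaps and `Λ` of the velocities such that balls within distance `L * ε` of
their ideal positions have reduced coordinates obeying the laws of the line up to an error `κ`. -/
structure Scale (L ε Λ κ : ℝ) : Prop where
  one_le : 1 ≤ L
  pos : 0 < ε
  speed_pos : 0 < Λ
  nonneg : 0 ≤ κ
  le_one : κ ≤ 1
  small : 4 * L ^ 2 * ε ≤ κ ^ 2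

namespace Scale

variable {L ε Λ κ : ℝ}

lemma time_pos (H : Scale L ε Λ κ) : 0 < ε / Λ := div_pos H.pos H.speed_pos

lemma four_mul_le (H : Scale L ε Λ κ) : 4 * (L * ε) ≤ κ :=
  calc 4 * (L * ε) ≤ 4 * (L ^ 2 * ε) := by
        gcongr
        · exact H.pos.le
        · exact le_self_pow₀ H.one_le two_ne_zero
    _ ≤ κ ^ 2 := by linarith [H.small]
    _ ≤ κ := pow_le_of_le_one H.nonneg H.le_one two_ne_zero

lemma lt_half (H : Scale L ε Λ κ) : L * ε < 1 / 2 := by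
  linarith [H.four_mul_le, H.le_one]

lemma sq_le (H : Scale L ε Λ κ) : (L * ε) ^ 2 ≤ κ * ε := by
  have : L ^ 2 * ε ≤ κ := by
    nlinarith [H.small, pow_le_of_le_one H.nonneg H.le_one two_ne_zero, H.nonneg]
  nlinarith [H.pos]

lemma four_mul_eps_le (H : Scale L ε Λ κ) : 4 * ε ≤ κ ^ 2 := by
  have : 1 ≤ L ^ 2 := one_le_pow₀ H.one_le
  nlinarith [H.small, H.pos]

end Scale

lemma abs_div_le_of_abs_le_mul {x y z : ℝ} (hy : 0 < y) (h : |x| ≤ z * y) : |x / y| ≤ z := by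
  rwa [abs_div, abs_of_pos hy, div_le_iff₀ hy]

namespace BallSystem

variable {ι : Type} {d n p : ℕ} (S : BallSystem ι d Set.univ) (Y : Layout ι d n p)

/-- All balls are within distance `η` of their ideal positions. -/
def Nearby (η t : ℝ) : Prop :=
  ∀ o, ∀ k ≤ o.len n p, ‖S.x (Y.ball o k) t - (2 * k : ℝ) • Y.dir o‖ ≤ η

/-- The gap `Γ` between the balls `k` and `k + 1` of the row `o`. -/
noncomputable def gap (o : Ray) (k : ℕ) (t : ℝ) : ℝ :=
  ⟪Y.dir o, S.x (Y.ball o (k + 1)) t - S.x (Y.ball o k) t⟫ - 2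

/-- The reduced coordinates of the system: on each row, the deviations from the ideal positions in
units of `ε`, and the velocities in units of `Λ`.  For the velocities `V` we take `S.vl` or
`S.vr`. -/
noncomputable def snap (ε Λ : ℝ) (V : ι → ℝ → EuclideanSpace ℝ (Fin d)) (t : ℝ) : Snapshot :=
  fun o =>
    { pos := fun k => (⟪Y.dir o, S.x (Y.ball o k) t⟫ - 2 * k) / ε
      vel := fun k => ⟪Y.dir o, V (Y.ball o k) t⟫ / Λ }

variable {S Y} {V : ι → ℝ → EuclideanSpace ℝ (Fin d)} {L ε Λ κ η t t₀ T : ℝ} {o : Ray}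

lemma snap_pos_succ_sub (k : ℕ) :
    (S.snap Y ε Λ V t o).pos (k + 1) - (S.snap Y ε Λ V t o).pos k = S.gap Y o k t / ε := by
  rw [gap, inner_sub_right]
  simp only [snap]
  push_cast
  ring

lemma snap_balanced : (S.snap Y ε Λ V t).Balanced where
  pos i := by
    simp only [snap, Y.dir_train i, Y.ball_zero .train (.arm i), Y.ball_zero (.arm !i) (.arm i),
      inner_neg_left, inner_add_left]
    push_cast
    ring
  vel i := by
    simp only [snap, Y.dir_train i, Y.ball_zero .train (.arm i), Y.ball_zero (.arm !i) (.arm i),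
      inner_neg_left, inner_add_left]
    ring

lemma snap_move {t' s : ℝ} (hε : ε ≠ 0) (hs : t' - t = s * (ε / Λ))
    (hx : ∀ i, S.x i t' = S.x i t + (t' - t) • S.vr i t) (hV : ∀ i, V i t' = S.vr i t) :
    S.snap Y ε Λ V t' = (S.snap Y ε Λ S.vr t).move s := by
  funext o
  simp only [snap, Snapshot.move, Row.move, hx, hV, inner_add_right, inner_smul_right, hs,
    Row.mk.injEq, and_true]
  funext k
  field_simp
  ring

namespace Nearby

lemma norm_sub_sub_le (N : S.Nearby Y η t) {k : ℕ} (hk : k < o.len n p) :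
    ‖S.x (Y.ball o (k + 1)) t - S.x (Y.ball o k) t - (2 : ℝ) • Y.dir o‖ ≤ 2 * η := by
  have h := norm_sub_le (S.x (Y.ball o (k + 1)) t - (2 * (k + 1 : ℕ) : ℝ) • Y.dir o)
    (S.x (Y.ball o k) t - (2 * k : ℝ) • Y.dir o)
  rw [show S.x (Y.ball o (k + 1)) t - (2 * (k + 1 : ℕ) : ℝ) • Y.dir o -
      (S.x (Y.ball o k) t - (2 * k : ℝ) • Y.dir o) =
    S.x (Y.ball o (k + 1)) t - S.x (Y.ball o k) t - (2 : ℝ) • Y.dir o by push_cast; module] at h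
  linarith [N o (k + 1) hk, N o k hk.le]

lemma separated (N : S.Nearby Y (L * ε) t) (H : Scale L ε Λ κ) :
    (S.snap Y ε Λ V t).Separated n p κ := by
  intro o k hk
  have hne : Y.ball o (k + 1) ≠ Y.ball o k := fun h => absurd (Y.ball_inj hk hk.le h).1 (by omega)
  have h := neg_sq_le_inner_sub_two (Y.norm_dir o) (S.dist_ge _ _ hne t (Set.mem_univ t))
    (N.norm_sub_sub_le hk)
  rw [snap_pos_succ_sub, le_div_iff₀ H.pos, gap]
  linarith [H.sq_le]

end Nearby

namespace Bounce

lemma exists_succ {j k : ℕ} (B : S.Bounce t (Y.ball o j) (Y.ball o k)) (N : S.Nearby Y η t)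
    (hη : η < 1 / 2) (hj : j ≤ o.len n p) (hk : k ≤ o.len n p) :
    ∃ l < o.len n p, S.Bounce t (Y.ball o (l + 1)) (Y.ball o l) := by
  have hclose := norm_sub_lt_three hη (N o j hj) (N o k hk) B.contact
  have hjk := lt_add_two_of_norm_smul_sub_smul_lt (Y.norm_dir o) hclose
  have hkj := lt_add_two_of_norm_smul_sub_smul_lt (Y.norm_dir o) (by rwa [norm_sub_rev] at hclose)
  have hne : j ≠ k := fun h => B.ne (by rw [h])
  obtain rfl | rfl : j = k + 1 ∨ k = j + 1 := by omega
  · exact ⟨k, hj, B⟩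
  · exact ⟨j, hk, B.symm⟩

lemma exists_ball {a b : ι} (B : S.Bounce t a b) (N : S.Nearby Y η t) (hη : η < 1 / 2) :
    ∃ o, ∃ k < o.len n p, S.Bounce t (Y.ball o (k + 1)) (Y.ball o k) := by
  obtain ⟨o, j, hj, rfl⟩ := Y.cover a
  obtain ⟨o', k, hk, rfl⟩ := Y.cover b
  rcases eq_or_ne o o' with rfl | ho
  · exact ⟨o, B.exists_succ N hη hj hk⟩
  rcases j.eq_zero_or_pos with rfl | hj0
  · rw [Y.ball_zero o o'] at B
    exact ⟨o', B.exists_succ N hη (Nat.zero_le _) hk⟩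
  rcases k.eq_zero_or_pos with rfl | hk0
  · rw [Y.ball_zero o' o] at B
    exact ⟨o, B.exists_succ N hη hj (Nat.zero_le _)⟩
  · exact absurd (norm_sub_lt_three hη (N o j hj) (N o' k hk) B.contact)
      (three_le_norm_smul_sub_smul (Y.norm_dir o) (Y.norm_dir o') (Y.inner_dir ho) hj0 hk0).not_gt

variable {k : ℕ}

lemma abs_inner_impulse_div_sub_le (B : S.Bounce t (Y.ball o (k + 1)) (Y.ball o k))
    (hk : k < o.len n p) (N : S.Nearby Y (L * ε) t) (H : Scale L ε Λ κ)
    (hV : ∀ k, ‖S.vl k t‖ ≤ Λ) (o' : Ray) :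
    |⟪Y.dir o', S.impulse t (Y.ball o (k + 1)) (Y.ball o k)⟫ / Λ -
      ((S.snap Y ε Λ S.vl t o).vel (k + 1) - (S.snap Y ε Λ S.vl t o).vel k) *
        ⟪Y.dir o', Y.dir o⟫| ≤ κ := by
  have h := B.abs_inner_impulse_sub_le (Y.norm_dir o) (Y.norm_dir o') (N.norm_sub_sub_le hk) hV
  have := abs_div_le_of_abs_le_mul H.speed_pos
    (h.trans (show 4 * Λ * (L * ε) ≤ κ * Λ by nlinarith [H.four_mul_le, H.speed_pos]))
  convert this using 2
  simp only [snap, inner_sub_right]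
  ring

lemma rowHit [Finite ι] (B : S.Bounce t (Y.ball o (k + 1)) (Y.ball o k)) (hk : k < o.len n p)
    (N : S.Nearby Y (L * ε) t) (H : Scale L ε Λ κ) (hV : ∀ k, ‖S.vl k t‖ ≤ Λ) :
    Row.Hit (o.len n p) κ (S.snap Y ε Λ S.vl t o) (S.snap Y ε Λ S.vr t o) k := by
  have himpulse := B.abs_inner_impulse_div_sub_le hk N H hV o
  rw [Y.inner_dir_self, mul_one] at himpulse
  refine ⟨rfl, ?_, ?_, ?_, ?_, fun j hj hjk hjk' => ?_⟩
  · rw [snap_pos_succ_sub]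
    exact abs_div_le_of_abs_le_mul H.pos
      ((B.abs_inner_sub_two_le (Y.norm_dir o) (N.norm_sub_sub_le hk)).trans H.sq_le)
  · have := B.inner_vl_sub_le (N.norm_sub_sub_le hk) hV
    simp only [snap]
    rw [← sub_div, ← inner_sub_right, div_le_iff₀ H.speed_pos]
    nlinarith [H.four_mul_le, H.speed_pos, H.nonneg]
  · rw [abs_sub_comm] at himpulse
    convert himpulse using 2
    simp only [snap, B.vr_left, inner_sub_right]
    ring
  · convert himpulse using 2
    simp only [snap, B.vr_right, inner_add_right]
    ring
  · simp only [snap]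
    rw [B.other _ (fun h => hjk' (Y.ball_inj hj hk h).1) fun h => hjk (Y.ball_inj hj hk.le h).1]

lemma hit [Finite ι] (B : S.Bounce t (Y.ball o (k + 1)) (Y.ball o k)) (hk : k < o.len n p)
    (N : S.Nearby Y (L * ε) t) (H : Scale L ε Λ κ) (hV : ∀ k, ‖S.vl k t‖ ≤ Λ) :
    Snapshot.Hit n p κ (S.snap Y ε Λ S.vl t) (S.snap Y ε Λ S.vr t) o k := by
  refine ⟨hk, B.rowHit hk N H hV, fun _ => rfl, fun o' ho j hj hkj => ?_, ?_⟩
  · simp only [snap]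
    rw [B.other _ (fun h => ?_) fun h => ?_]
    · obtain ⟨hjk, ho' | hj0⟩ := Y.ball_inj hj hk h
      exacts [ho ho', by omega]
    · obtain ⟨hjk, ho' | hj0⟩ := Y.ball_inj hj hk.le h
      exacts [ho ho', by omega]
  · rintro rfl o' ho
    have himpulse := B.abs_inner_impulse_div_sub_le hk N H hV o'
    rw [Y.inner_dir ho] at himpulse
    convert himpulse using 2
    simp only [snap, Y.ball_zero o' o, B.vr_right, inner_add_right]
    ring

end Bounce

lemma evolution [Fintype ι] (H : Scale L ε Λ κ) (hΛ : S.speedNorm t₀ = Λ)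
    (N : ∀ s ∈ Set.Icc 0 T, S.Nearby Y (L * ε) (t₀ + s * (ε / Λ))) :
    Evolution n p κ T {s | ∃ i j, S.Bounce (t₀ + s * (ε / Λ)) i j}
      (fun s => S.snap Y ε Λ S.vr (t₀ + s * (ε / Λ)))
      (fun s => S.snap Y ε Λ S.vl (t₀ + s * (ε / Λ))) where
  right s _ := by
    have hclock : Filter.Tendsto (fun s' => t₀ + s' * (ε / Λ)) (nhdsWithin s (Set.Ioi s))
        (nhdsWithin (t₀ + s * (ε / Λ)) (Set.Ioi (t₀ + s * (ε / Λ)))) :=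
      (by fun_prop : ContinuousWithinAt _ _ _).tendsto_nhdsWithin fun s' hs' =>
        add_lt_add_right (mul_lt_mul_of_pos_right hs' H.time_pos) t₀
    filter_upwards [hclock.eventually (S.eventually_right _)] with s' hs'
    exact snap_move H.pos.ne' (by ring) (fun i => (hs' i).1) fun i => (hs' i).2
  left s hs := by
    have hclock : Filter.Tendsto (fun s' => t₀ + s' * (ε / Λ)) (nhdsWithin s (Set.Iio s))
        (nhdsWithin (t₀ + s * (ε / Λ)) (Set.Iio (t₀ + s * (ε / Λ)))) :=
      (by fun_prop : ContinuousWithinAt _ _ _).tendsto_nhdsWithin fun s' hs' =>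
        add_lt_add_right (mul_lt_mul_of_pos_right hs' H.time_pos) t₀
    obtain ⟨s', hs', hmem⟩ := ((hclock.eventually (S.eventually_left _)).and
      (Ico_mem_nhdsLT hs.1)).exists
    refine ⟨s', hmem, snap_move H.pos.ne' (by ring) (fun i => ?_) fun i => (hs' i).2.symm⟩
    rw [(hs' i).2, (hs' i).1]
    module
  balanced_left _ _ := snap_balanced
  balanced _ _ := snap_balanced
  separated s hs := (N s hs).separated H
  jump s hs := by
    rcases S.eq_or_bounce (t₀ + s * (ε / Λ)) with h | ⟨i, j, B⟩
    · exact .inl (funext fun o => by simp only [snap, h])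
    · have hspeed := (S.speedNorm_eq_and_norm_sub_le (t₀ := t₀) (t := t₀ + s * (ε / Λ))
        (le_add_of_nonneg_right (mul_nonneg hs.1.le H.time_pos.le))).1
      have hnear := N s (Set.Ioc_subset_Icc_self hs)
      obtain ⟨o, k, hk, B'⟩ := B.exists_ball hnear H.lt_half
      exact .inr ⟨⟨i, j, B⟩, o, k, B'.hit hk hnear H
        fun i => (S.norm_vl_le i _).trans_eq (hspeed.trans hΛ)⟩

end BallSystem

namespace Frame

variable {E : Type*} [NormedAddCommGroup E] [InnerProductSpace ℝ E] {w u : E}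

lemma inner_eq_zero (h : Frame w u) : ⟪u, w⟫ = (0 : ℝ) := by
  have := h.norm_sq w
  rw [real_inner_self_eq_norm_sq, h.norm_left] at this
  exact pow_eq_zero_iff two_ne_zero |>.1 (by linarith)

lemma norm_le (h : Frame w u) (x : E) : ‖x‖ ≤ |⟪w, x⟫| + |⟪u, x⟫| := by
  refine le_of_sq_le_sq ?_ (by positivity)
  rw [h.norm_sq, add_sq, sq_abs, sq_abs]
  have : 0 ≤ 2 * |⟪w, x⟫| * |⟪u, x⟫| := by positivity
  linarith

lemma norm_sub_two_mul_smul_le (h : Frame w u) {x : ℕ → E} {ε : ℝ} {n : ℕ}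
    (hzero : |⟪w, x 0⟫| ≤ ε)
    (hgap : ∀ k < n, 0 ≤ ⟪w, x (k + 1) - x k⟫ - 2 ∧ ⟪w, x (k + 1) - x k⟫ - 2 ≤ ε)
    (hside : ∀ k ≤ n, |⟪u, x k⟫| ≤ 2 * ε) {k : ℕ} (hk : k ≤ n) :
    ‖x k - (2 * k : ℝ) • w‖ ≤ (k + 3) * ε := by
  have hε : 0 ≤ ε := (abs_nonneg _).trans hzero
  have hdev : ∀ k ≤ n, -ε ≤ ⟪w, x k⟫ - 2 * k ∧ ⟪w, x k⟫ - 2 * k ≤ (k + 1) * ε := by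
    intro k
    induction k with
    | zero => intro _; simpa using abs_le.1 hzero
    | succ k ih =>
      intro hk
      have hprev := ih (by omega)
      have hstep := hgap k hk
      rw [inner_sub_right] at hstep
      push_cast
      constructor <;> linarith
  have hnorm := h.norm_le (x k - (2 * k : ℝ) • w)
  rw [inner_sub_right, inner_sub_right, inner_smul_right, inner_smul_right, h.inner_eq_zero,
    real_inner_self_eq_norm_sq, h.norm_left, mul_zero, sub_zero, one_pow, mul_one] at hnorm
  have hkε : 0 ≤ (k : ℝ) * ε := by positivity
  have : |⟪w, x k⟫ - 2 * k| ≤ (k + 1) * ε :=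
    abs_le.2 ⟨by linarith [hdev k hk], (hdev k hk).2⟩
  linarith [hside k hk]

end Frame

namespace BallSystem

variable {ι : Type} {d n p : ℕ} (S : BallSystem ι d Set.univ) (Y : Layout ι d n p)

/-- The `(ε, ρ)` initial conditions, in terms of the rows of a layout. -/
structure Prepared (ε ρ t : ℝ) : Prop where
  apex : ∀ i, 0 ≤ ⟪Y.dir (.arm i), S.x (Y.ball (.arm i) 0) t⟫
  head : -ε ≤ ⟪Y.dir .train, S.x (Y.ball .train 0) t⟫
  side : ∀ o, ∀ k ≤ o.len n p, (o = .train → k ≠ 0) → |⟪Y.side o, S.x (Y.ball o k) t⟫| ≤ ε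
  le_gap : ∀ o, ∀ k < o.len n p, ε * ρ⁻¹ ≤ S.gap Y o k t
  gap_le : ∀ o, ∀ k < o.len n p, S.gap Y o k t ≤ ε
  ratio : ∃ i, S.gap Y (.arm i) 0 t / S.gap Y (.arm !i) 0 t ≤ 2 / 3

variable {S Y} {V : ι → ℝ → EuclideanSpace ℝ (Fin d)} {L K ε ρ Λ κ η s t t₀ T : ℝ}

lemma firstGap_snap (i : Bool) :
    (S.snap Y ε Λ V t).firstGap i = S.gap Y (.arm i) 0 t / ε :=
  snap_pos_succ_sub 0

namespace Prepared

lemma abs_inner_dir_apex_le (P : S.Prepared Y ε ρ t) (o : Ray) :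
    |⟪Y.dir o, S.x (Y.ball .train 0) t⟫| ≤ ε := by
  have hapex (i : Bool) : 0 ≤ ⟪Y.dir (.arm i), S.x (Y.ball .train 0) t⟫ := by
    rw [Y.ball_zero .train (.arm i)]
    exact P.apex i
  have hsum (i : Bool) : ⟪Y.dir .train, S.x (Y.ball .train 0) t⟫ =
      -(⟪Y.dir (.arm i), S.x (Y.ball .train 0) t⟫ +
        ⟪Y.dir (.arm !i), S.x (Y.ball .train 0) t⟫) := by
    rw [Y.dir_train i, inner_neg_left, inner_add_left]
  have hhead := P.head
  rcases o with i | _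
  · rw [abs_of_nonneg (hapex i)]
    linarith [hsum i, hapex !i]
  · rw [abs_of_nonpos (by linarith [hsum true, hapex true, hapex !true])]
    linarith

lemma abs_inner_side_le (P : S.Prepared Y ε ρ t) {o : Ray} {k : ℕ} (hk : k ≤ o.len n p) :
    |⟪Y.side o, S.x (Y.ball o k) t⟫| ≤ 2 * ε := by
  have hε : 0 ≤ ε := (abs_nonneg _).trans (P.abs_inner_dir_apex_le .train)
  by_cases h : o = .train → k ≠ 0
  · linarith [P.side o k hk h]
  obtain ⟨rfl, rfl⟩ : o = .train ∧ k = 0 := by simpa using h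
  have hside := P.side (.arm true) 0 (Nat.zero_le _) nofun
  rw [Y.ball_zero _ .train] at hside
  calc |⟪Y.side .train, S.x (Y.ball .train 0) t⟫|
      ≤ ‖Y.side .train‖ * ‖S.x (Y.ball .train 0) t‖ := abs_real_inner_le_norm _ _
    _ = ‖S.x (Y.ball .train 0) t‖ := by rw [(Y.frame _).norm_right, one_mul]
    _ ≤ _ := (Y.frame (.arm true)).norm_le _
    _ ≤ 2 * ε := by linarith [P.abs_inner_dir_apex_le (.arm true)]

lemma nearby (P : S.Prepared Y ε ρ t) (hρ : 0 ≤ ρ) : S.Nearby Y ((n + p + 3) * ε) t := by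
  intro o k hk
  have hε : 0 ≤ ε := (abs_nonneg _).trans (P.abs_inner_dir_apex_le .train)
  have hlen : k ≤ n + p := hk.trans (by cases o <;> simp [Ray.len])
  have happrox := (Y.frame o).norm_sub_two_mul_smul_le (x := fun k => S.x (Y.ball o k) t)
    (by simpa only [Y.ball_zero o .train] using P.abs_inner_dir_apex_le o)
    (fun k hk => ⟨(by positivity : 0 ≤ ε * ρ⁻¹).trans (P.le_gap o k hk), P.gap_le o k hk⟩)
    (fun k hk => P.abs_inner_side_le hk) hk
  refine happrox.trans ?_
  gcongr
  exact_mod_cast hlen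

lemma spaced (P : S.Prepared Y ε ρ t) (hε : 0 < ε) : (S.snap Y ε Λ V t).Spaced n p ρ where
  toBalanced := snap_balanced
  le_gap o k hk := by
    rw [snap_pos_succ_sub, le_div_iff₀ hε, mul_comm]
    exact P.le_gap o k hk
  gap_le o k hk := by
    rw [snap_pos_succ_sub, div_le_one hε]
    exact P.gap_le o k hk

lemma of_final (P : S.Prepared Y ε ρ t₀) (hε : 0 < ε) (hρ : 0 < ρ) (hn : 0 < n) (hT : 5 ≤ T)
    (hx : ∀ i, ‖S.x i t - S.x i t₀‖ ≤ T * ε)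
    (H : Snapshot.Final n p ρ (S.snap Y ε Λ V t₀) (S.snap Y ε Λ V t)) :
    S.Prepared Y (ε * (1 + 2 * T)) (ρ * (1 + 3 * T)) t := by
  have hinner {w : EuclideanSpace ℝ (Fin d)} (hw : ‖w‖ = 1) (i : ι) :
      |⟪w, S.x i t⟫ - ⟪w, S.x i t₀⟫| ≤ T * ε := by
    rw [← inner_sub_right]
    refine (abs_real_inner_le_norm _ _).trans ?_
    rw [hw, one_mul]
    exact hx i
  have hTε : 0 ≤ T * ε := by positivity
  have hgap (o : Ray) (k : ℕ) (hk : k < o.len n p) : 11 / 16 * ρ⁻¹ * ε ≤ S.gap Y o k t := by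
    have := H.gap o k hk
    rwa [snap_pos_succ_sub, le_div_iff₀ hε] at this
  refine ⟨fun i => ?_, ?_, fun o k hk h => ?_, fun o k hk => le_trans ?_ (hgap o k hk),
    fun o k hk => ?_, H.ratio.imp fun i h => ?_⟩
  · have := H.apex i
    simp only [snap, div_le_div_iff_of_pos_right hε] at this
    linarith [P.apex i]
  · linarith [P.head, abs_le.1 (hinner (Y.norm_dir .train) (Y.ball .train 0))]
  · have := abs_sub_abs_le_abs_sub ⟪Y.side o, S.x (Y.ball o k) t⟫
      ⟪Y.side o, S.x (Y.ball o k) t₀⟫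
    linarith [hinner (Y.frame o).norm_right (Y.ball o k), P.side o k hk h]
  · have hratio : (1 + 2 * T) / (1 + 3 * T) ≤ 11 / 16 := by
      rw [div_le_iff₀ (by positivity)]
      linarith
    calc ε * (1 + 2 * T) * (ρ * (1 + 3 * T))⁻¹ = (1 + 2 * T) / (1 + 3 * T) * ρ⁻¹ * ε := by
          rw [mul_inv, div_eq_mul_inv]
          ring
      _ ≤ 11 / 16 * ρ⁻¹ * ε := by gcongr
  · have hle := P.gap_le o k hk
    rw [gap, inner_sub_right] at hle ⊢
    linarith [abs_le.1 (hinner (Y.norm_dir o) (Y.ball o (k + 1))),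
      abs_le.1 (hinner (Y.norm_dir o) (Y.ball o k))]
  · have hpos : 0 < S.gap Y (.arm !i) 0 t :=
      (by positivity : 0 < 11 / 16 * ρ⁻¹ * ε).trans_le (hgap _ 0 hn)
    rwa [firstGap_snap, firstGap_snap, ← mul_div_assoc,
      div_le_div_iff_of_pos_right hε, ← div_le_iff₀ hpos] at h

end Prepared

section Speed

variable [Fintype ι]

lemma norm_sub_le_mul (hΛ : S.speedNorm t₀ = Λ) (hpos : 0 < Λ) (hε : 0 ≤ ε) (hs : 0 ≤ s) (i : ι) :
    ‖S.x i (t₀ + s * (ε / Λ)) - S.x i t₀‖ ≤ s * ε := by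
  refine ((S.speedNorm_eq_and_norm_sub_le (le_add_of_nonneg_right (by positivity))).2 i).trans_eq ?_
  rw [hΛ]
  field_simp
  ring

lemma Nearby.later (N : S.Nearby Y η t₀) (hΛ : S.speedNorm t₀ = Λ) (hpos : 0 < Λ) (hε : 0 ≤ ε)
    (hs : 0 ≤ s) : S.Nearby Y (η + s * ε) (t₀ + s * (ε / Λ)) := fun o k hk => by
  linarith [N o k hk, norm_sub_le_mul hΛ hpos hε hs (Y.ball o k), norm_sub_le_norm_sub_add_norm_sub
    (S.x (Y.ball o k) (t₀ + s * (ε / Λ))) (S.x (Y.ball o k) t₀) ((2 * k : ℝ) • Y.dir o)]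

/-- The other balls are slow because ball `j` carries almost all of the energy. -/
lemma norm_vr_le_of_norm_vr_sub_le {i j : ι} (hij : i ≠ j) {w : EuclideanSpace ℝ (Fin d)}
    (hw : ‖w‖ = 1) (hpos : 0 < Λ) (hΛ : S.speedNorm t = Λ) (h : ‖S.vr j t - Λ • w‖ ≤ Λ * ε)
    (hε : ε ≤ 1) (hκ : 0 ≤ κ) (hεκ : 2 * ε ≤ κ ^ 2) : ‖S.vr i t‖ ≤ κ * Λ := by
  classical
  have henergy : ‖S.vr i t‖ ^ 2 + ‖S.vr j t‖ ^ 2 ≤ Λ ^ 2 := by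
    rw [← hΛ, speedNorm, Real.sq_sqrt (Finset.sum_nonneg fun _ _ => sq_nonneg _),
      ← Finset.sum_pair (f := fun k => ‖S.vr k t‖ ^ 2) hij]
    exact Finset.sum_le_univ_sum_of_nonneg fun _ => sq_nonneg _
  have hj : Λ * (1 - ε) ≤ ‖S.vr j t‖ := by
    have := norm_sub_norm_le (Λ • w) (S.vr j t)
    rw [norm_smul, hw, Real.norm_of_nonneg hpos.le, norm_sub_rev] at this
    linarith
  have hj_sq : (Λ * (1 - ε)) ^ 2 ≤ ‖S.vr j t‖ ^ 2 :=
    pow_le_pow_left₀ (mul_nonneg hpos.le (by linarith)) hj 2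
  have hκΛ : Λ ^ 2 * (2 * ε) ≤ Λ ^ 2 * κ ^ 2 := by gcongr
  refine le_of_sq_le_sq ?_ (by positivity)
  nlinarith [sq_nonneg (Λ * ε)]

lemma launch (H : Scale L ε Λ κ) (hΛ : S.speedNorm t = Λ)
    (h : ‖S.vr (Y.ball .train p) t - Λ • -Y.dir .train‖ ≤ Λ * ε) :
    (S.snap Y ε Λ S.vr t).Launch n p κ := by
  have hκ : κ ^ 2 ≤ κ := pow_le_of_le_one H.nonneg H.le_one two_ne_zero
  have hslow (o : Ray) (k : ℕ) (hk : k ≤ o.len n p) (hne : k = p → o ≠ .train ∧ k ≠ 0) :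
      |(S.snap Y ε Λ S.vr t o).vel k| ≤ κ := by
    refine abs_div_le_of_abs_le_mul H.speed_pos ((abs_real_inner_le_norm _ _).trans ?_)
    rw [Y.norm_dir, one_mul]
    refine norm_vr_le_of_norm_vr_sub_le (fun heq => ?_) ((norm_neg _).trans (Y.norm_dir .train))
      H.speed_pos hΛ h (by linarith [H.four_mul_eps_le, H.le_one]) H.nonneg
      (by linarith [H.four_mul_eps_le, H.pos])
    obtain ⟨hkp, ho | hk0⟩ := Y.ball_inj hk le_rfl heq
    exacts [(hne hkp).1 ho, (hne hkp).2 hk0]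
  have hfast (o : Ray) :
      |⟪Y.dir o, S.vr (Y.ball .train p) t⟫ / Λ - -⟪Y.dir o, Y.dir .train⟫| ≤ κ := by
    have := abs_real_inner_le_norm (Y.dir o) (S.vr (Y.ball .train p) t - Λ • -Y.dir .train)
    rw [Y.norm_dir, one_mul] at this
    have := abs_div_le_of_abs_le_mul (z := κ) H.speed_pos
      (this.trans (h.trans (by nlinarith [H.four_mul_eps_le, H.speed_pos, H.pos])))
    rwa [inner_sub_right, inner_smul_right, inner_neg_right, sub_div,
      mul_div_cancel_left₀ _ H.speed_pos.ne'] at this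
  refine ⟨fun i k hk₁ hk => hslow _ k hk fun _ => ⟨nofun, by omega⟩,
    fun k _ hk => hslow .train k hk.le fun _ => by omega, fun hp => ⟨?_, fun i =>
      hslow _ 0 (Nat.zero_le _) fun hp0 => absurd hp0.symm hp⟩, ?_⟩
  · simpa only [snap, Y.inner_dir_self] using hfast .train
  · rintro rfl i
    have htrain : Ray.arm i ≠ .train := nofun
    simpa only [snap, Y.inner_dir htrain, neg_neg, Y.ball_zero .train (.arm i)] using
      hfast (.arm i)

theorem Prepared.step (P : S.Prepared Y ε ρ t₀) (H : Scale L ε Λ κ) (hK : Tolerance n p ρ κ K T)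
    (hΛ : S.speedNorm t₀ = Λ)
    (h : ‖S.vr (Y.ball .train p) t₀ - Λ • -Y.dir .train‖ ≤ Λ * ε)
    (hL : n + p + 3 + T ≤ L) (hT : p + 1 + 4 ^ n ≤ T) :
    (∃ F : Finset ℝ, ↑F ⊆ {s | ∃ i j, S.Bounce (t₀ + s * (ε / Λ)) i j} ∩ Set.Ioo 0 T ∧
      F.card = p + n * (n + 1)) ∧
    S.Prepared Y (ε * (1 + 2 * T)) (ρ * (1 + 3 * T)) (t₀ + T * (ε / Λ)) := by
  have hρ : 0 < ρ := by linarith [hK.two_le]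
  have hT₅ : 5 ≤ T := by
    have : (4 : ℝ) ^ 1 ≤ 4 ^ n := pow_le_pow_right₀ (by norm_num) hK.pos
    linarith [p.cast_nonneg (α := ℝ)]
  have E := evolution (Y := Y) (T := T) H hΛ fun s hs o k hk =>
    ((P.nearby hρ.le).later hΛ H.speed_pos H.pos.le hs.1 o k hk).trans <| by
      rw [← add_mul]
      gcongr
      · exact H.pos.le
      · linarith [hs.2]
  have hstart : t₀ + 0 * (ε / Λ) = t₀ := by ring
  obtain ⟨hcollisions, hfinal⟩ := E.outcome hK (by rw [hstart]; exact P.spaced H.pos)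
    (by rw [hstart]; exact launch H hΛ h) hT
  rw [hstart] at hfinal
  exact ⟨hcollisions, P.of_final H.pos hρ hK.pos hT₅
    (norm_sub_le_mul hΛ H.speed_pos H.pos.le (by linarith)) hfinal⟩

end Speed

end BallSystem

/-! ### The planar configuration -/

lemma inner_plane (x y : EuclideanSpace ℝ (Fin 2)) : ⟪x, y⟫ = x 0 * y 0 + x 1 * y 1 := by
  rw [PiLp.inner_apply, Fin.sum_univ_two]
  simp [mul_comm]

lemma Frame.of_coords {w u : EuclideanSpace ℝ (Fin 2)} (hw : w 0 ^ 2 + w 1 ^ 2 = 1)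
    (hzero : u 0 = w 1) (hone : u 1 = -w 0) : Frame w u where
  norm_left := by
    rw [EuclideanSpace.norm_eq, Fin.sum_univ_two]
    simp only [Real.norm_eq_abs, sq_abs, hw, Real.sqrt_one]
  norm_right := by
    rw [EuclideanSpace.norm_eq, Fin.sum_univ_two, hzero, hone]
    simp only [Real.norm_eq_abs, sq_abs, neg_sq]
    rw [add_comm, hw, Real.sqrt_one]
  norm_sq x := by
    rw [← real_inner_self_eq_norm_sq, inner_plane, inner_plane, inner_plane, hzero, hone]
    linear_combination -(x 0 ^ 2 + x 1 ^ 2) * hw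

lemma Frame.of_neg_left {E : Type*} [NormedAddCommGroup E] [InnerProductSpace ℝ E] {w u : E}
    (h : Frame (-w) u) : Frame w u :=
  ⟨by simpa using h.norm_left, h.norm_right, by simpa using h.norm_sq⟩

lemma frame_neg_w0 : Frame (-w0) u0 := by
  refine (Frame.of_coords ?_ ?_ ?_ : Frame (- -w0) u0).of_neg_left <;> simp [w0, u0]

lemma frame_w1 : Frame w1 u1 := by
  have hsqrt := Real.sq_sqrt (show (0 : ℝ) ≤ 3 by norm_num)
  apply Frame.of_coords <;> simp [w1, u1]
  linear_combination hsqrt / 4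

lemma frame_w2 : Frame w2 u2 := by
  have hsqrt := Real.sq_sqrt (show (0 : ℝ) ≤ 3 by norm_num)
  refine (Frame.of_coords ?_ ?_ ?_ : Frame (-w2) u2).of_neg_left <;> simp [w2, u2]
  linear_combination hsqrt / 4

section Discs

variable {p n : ℕ} [NeZero n]

/-- The disc `B_{k+1}` for `i = false` and the disc `C_{k+1}` for `i = true`. -/
def armDisc : Bool → Fin n → BBIndex (p + 1) n
  | false, k => .inr (.inl k)
  | true, k => .inr (.inr k)

/-- The discs of each row: `A_1, A_2, …` on the train, `B_0, B_1, …` on the arm `false` and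
`C_0, C_1, …` on the arm `true`, where `B_0 = C_0 = A_1`.  Indices that are too large are reduced
modulo the number of discs. -/
def disc : Ray → ℕ → BBIndex (p + 1) n
  | .train, k => .inl (Fin.ofNat (p + 1) k)
  | .arm _, 0 => .inl 0
  | .arm i, k + 1 => armDisc i (Fin.ofNat n k)

lemma disc_zero (o : Ray) : (disc o 0 : BBIndex (p + 1) n) = .inl 0 := by
  rcases o with i | _ <;> rfl

lemma disc_train {k : ℕ} (hk : k < p + 1) :
    (disc .train k : BBIndex (p + 1) n) = .inl ⟨k, hk⟩ :=
  congrArg Sum.inl (Fin.ext (Nat.mod_eq_of_lt hk))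

lemma disc_arm_succ {k : ℕ} (hk : k < n) (i : Bool) :
    (disc (.arm i) (k + 1) : BBIndex (p + 1) n) = armDisc i ⟨k, hk⟩ :=
  congrArg (armDisc i) (Fin.ext (Nat.mod_eq_of_lt hk))

lemma disc_inj {o o' : Ray} {j k : ℕ} (hj : j ≤ o.len n p) (hk : k ≤ o'.len n p)
    (h : (disc o j : BBIndex (p + 1) n) = disc o' k) : j = k ∧ (o = o' ∨ j = 0) := by
  let rank : BBIndex (p + 1) n → ℕ := Sum.elim (·) (Sum.elim (· + 1) (· + 1))
  let row : BBIndex (p + 1) n → Ray :=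
    Sum.elim (fun _ => .train) (Sum.elim (fun _ => .arm false) fun _ => .arm true)
  have hrank {o : Ray} {k : ℕ} (hk : k ≤ o.len n p) : rank (disc o k) = k := by
    rcases o with i | _
    · rcases k with _ | k
      · rfl
      · rw [disc_arm_succ (n := n) hk]
        cases i <;> rfl
    · rw [disc_train (p := p) (Nat.lt_succ_iff.2 hk)]
      rfl
  have hrow (o : Ray) (k : ℕ) : row (disc o (k + 1)) = o := by
    rcases o with (_ | _) | _ <;> rfl
  obtain rfl : j = k := by rw [← hrank hj, h, hrank hk]
  refine ⟨rfl, ?_⟩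
  rcases j with _ | j
  · exact .inr rfl
  · exact .inl (by rw [← hrow o j, h, hrow])

lemma exists_disc_eq (i : BBIndex (p + 1) n) : ∃ o : Ray, ∃ k ≤ o.len n p, disc o k = i := by
  rcases i with i | i | i
  · exact ⟨.train, i, Nat.lt_succ_iff.1 i.2, disc_train i.2⟩
  · exact ⟨.arm false, i + 1, i.2, disc_arm_succ i.2 false⟩
  · exact ⟨.arm true, i + 1, i.2, disc_arm_succ i.2 true⟩

/-- The layout of the discs in the plane. -/
noncomputable def planeLayout (p n : ℕ) [NeZero n] : Layout (BBIndex (p + 1) n) 2 n p where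
  ball := disc
  dir
    | .train => -w0
    | .arm false => w1
    | .arm true => w2
  side
    | .train => u0
    | .arm false => u1
    | .arm true => u2
  frame
    | .train => frame_neg_w0
    | .arm false => frame_w1
    | .arm true => frame_w2
  inner_dir {o o'} ho := by
    have hsqrt := Real.sq_sqrt (show (0 : ℝ) ≤ 3 by norm_num)
    rcases o with (_ | _) | _ <;> rcases o' with (_ | _) | _ <;>
      first
      | exact absurd rfl ho
      | (simp only [inner_plane]; simp [w0, w1, w2]; done)
      | (simp only [inner_plane]; simp [w1, w2]; linear_combination -hsqrt / 4)
  ball_zero o o' := by rw [disc_zero, disc_zero]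
  ball_inj := disc_inj
  cover := exists_disc_eq

namespace BallSystem

variable {S : BallSystem (BBIndex (p + 1) n) 2 Set.univ} {ε ρ t : ℝ} {k : ℕ}

lemma gap_train (hk : k + 1 < p + 1) : S.gap (planeLayout p n) .train k t =
    ⟪w0, S.x (.inl ⟨k, by omega⟩) t - S.x (.inl ⟨k + 1, hk⟩) t⟫ - 2 := by
  change ⟪-w0, S.x (disc .train (k + 1)) t - S.x (disc .train k) t⟫ - 2 = _
  rw [disc_train hk, disc_train (by omega), inner_neg_left, ← inner_neg_right, neg_sub]

lemma gap_arm_zero (i : Bool) : S.gap (planeLayout p n) (.arm i) 0 t =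
    ⟪(planeLayout p n).dir (.arm i),
      S.x (armDisc i ⟨0, NeZero.pos n⟩) t - S.x (.inl 0) t⟫ - 2 := by
  rw [← disc_arm_succ]
  rfl

lemma gap_arm_succ (hk : k + 1 < n) (i : Bool) : S.gap (planeLayout p n) (.arm i) (k + 1) t =
    ⟪(planeLayout p n).dir (.arm i),
      S.x (armDisc i ⟨k + 1, hk⟩) t - S.x (armDisc i ⟨k, by omega⟩) t⟫ - 2 := by
  rw [← disc_arm_succ, ← disc_arm_succ]
  rfl

lemma prepared_of_initCond (h : InitCond (p + 1) n p.succ_pos (NeZero.pos n) S ε ρ t) :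
    S.Prepared (planeLayout p n) ε ρ t := by
  obtain ⟨⟨hb, hc, ha⟩, hsideA, hsideB₀, hsideB, hsideC₀, hsideC, hgapA, hgapB₀, hgapB, hgapC₀,
    hgapC, hratio⟩ := h
  have hgap : ∀ o : Ray, ∀ k < o.len n p, ε * ρ⁻¹ ≤ S.gap (planeLayout p n) o k t ∧
      S.gap (planeLayout p n) o k t ≤ ε := by
    rintro (i | _) (_ | k) hk
    · rw [gap_arm_zero]
      cases i
      exacts [hgapB₀, hgapC₀]
    · rw [gap_arm_succ (n := n) hk]
      cases i
      exacts [hgapB k hk, hgapC k hk]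
    all_goals
      rw [gap_train (p := p) (Nat.succ_lt_succ hk)]
      exact hgapA _ _
  refine ⟨?_, ?_, ?_, fun o k hk => (hgap o k hk).1, fun o k hk => (hgap o k hk).2, ?_⟩
  · rintro (_ | _)
    exacts [hb, hc]
  · change -ε ≤ ⟪-w0, _⟫
    rw [inner_neg_left]
    exact neg_le_neg ha
  · rintro ((_ | _) | _) (_ | k) hk hne
    · exact hsideB₀
    · change |⟪u1, S.x (disc (.arm false) (k + 1)) t⟫| ≤ ε
      rw [disc_arm_succ (n := n) hk]
      exact hsideB ⟨k, hk⟩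
    · exact hsideC₀
    · change |⟪u2, S.x (disc (.arm true) (k + 1)) t⟫| ≤ ε
      rw [disc_arm_succ (n := n) hk]
      exact hsideC ⟨k, hk⟩
    · exact absurd rfl (hne rfl)
    · change |⟪u0, S.x (disc .train (k + 1)) t⟫| ≤ ε
      rw [disc_train (p := p) (Nat.lt_succ_iff.2 hk)]
      exact hsideA ⟨k + 1, Nat.lt_succ_iff.2 hk⟩ k.succ_pos
  · simp only [gap_arm_zero]
    exact hratio.elim (fun h => ⟨false, h⟩) fun h => ⟨true, h⟩

lemma Prepared.initCond (P : S.Prepared (planeLayout p n) ε ρ t) :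
    InitCond (p + 1) n p.succ_pos (NeZero.pos n) S ε ρ t := by
  have hsideA (k : Fin (p + 1)) (hk : 0 < (k : ℕ)) : |⟪u0, S.x (.inl k) t⟫| ≤ ε := by
    rw [← disc_train k.2]
    exact P.side .train k (Nat.lt_succ_iff.1 k.2) fun _ => hk.ne'
  have hside (i : Bool) (k : Fin n) :
      |⟪(planeLayout p n).side (.arm i), S.x (armDisc i k) t⟫| ≤ ε := by
    rw [← disc_arm_succ k.2]
    exact P.side (.arm i) (k + 1) k.2 nofun
  have hgap (o : Ray) (k : ℕ) (hk : k < o.len n p) := And.intro (P.le_gap o k hk) (P.gap_le o k hk)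
  have hgapA (k : ℕ) (hk : k + 1 < p + 1) :=
    gap_train (n := n) hk ▸ hgap .train k (Nat.lt_of_succ_lt_succ hk)
  have hgap₀ (i : Bool) := gap_arm_zero (p := p) (n := n) i ▸ hgap (.arm i) 0 (NeZero.pos n)
  have hgap' (i : Bool) (k : ℕ) (hk : k + 1 < n) :=
    gap_arm_succ (p := p) (n := n) hk i ▸ hgap (.arm i) (k + 1) hk
  have hhead : -ε ≤ ⟪-w0, S.x (.inl 0) t⟫ := P.head
  rw [inner_neg_left, neg_le_neg_iff] at hhead
  refine ⟨⟨P.apex false, P.apex true, hhead⟩, hsideA, P.side (.arm false) 0 (Nat.zero_le _) nofun,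
    hside false, P.side (.arm true) 0 (Nat.zero_le _) nofun, hside true, hgapA, hgap₀ false,
    hgap' false, hgap₀ true, hgap' true, ?_⟩
  obtain ⟨_ | _, h⟩ := P.ratio <;> simp only [gap_arm_zero] at h
  exacts [.inl h, .inr h]

end BallSystem

end Discs

namespace BallSystem

variable {ι : Type} [DecidableEq ι] {d : ℕ} {S : BallSystem ι d Set.univ}

lemma exists_finset_collisions {t₀ r T : ℝ} (hr : 0 < r) {F : Finset ℝ}
    (hF : ↑F ⊆ {s | ∃ i j, S.Bounce (t₀ + s * r) i j} ∩ Set.Ioo 0 T) :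
    ∃ G : Finset (ℝ × Finset ι),
      ↑G ⊆ {c ∈ S.collisions | c.1 ∈ Set.Ico t₀ (t₀ + T * r)} ∧ G.card = F.card := by
  have h (s : F) : ∃ B : Finset ι, (t₀ + s * r, B) ∈ S.collisions := by
    obtain ⟨i, j, B⟩ := (hF s.2).1
    exact ⟨_, B.mem_collisions⟩
  choose B hB using h
  refine ⟨Finset.univ.image fun s : F => (t₀ + s * r, B s), ?_, ?_⟩
  · intro c hc
    simp only [Finset.coe_image, Finset.coe_univ, Set.image_univ, Set.mem_range] at hc
    obtain ⟨s, rfl⟩ := hc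
    obtain ⟨hpos, hlt⟩ := (hF s.2).2
    exact ⟨hB s, by nlinarith, by simpa using mul_lt_mul_of_pos_right hlt hr⟩
  · rw [Finset.card_image_of_injective _ fun s s' hss => ?_, Finset.card_univ, Fintype.card_coe]
    have h := congrArg Prod.fst hss
    simp only [add_right_inj, mul_eq_mul_right_iff, hr.ne', or_false] at h
    exact Subtype.ext h

end BallSystem

lemma exists_forall_tolerance {n : ℕ} {ρ T : ℝ} (hn : 0 < n) (hρ : 2 ≤ ρ) (hT : 0 ≤ T) (N : ℕ) :
    ∃ κ K : ℝ, 0 < κ ∧ κ ≤ 1 ∧ ∀ p ≤ N, Tolerance n p ρ κ K T := by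
  have hK : (1 : ℝ) ≤ 100 * 4 ^ n * (1 + T) := by
    have : (1 : ℝ) ≤ 4 ^ n := one_le_pow₀ (by norm_num)
    nlinarith
  have hpow := one_le_pow₀ hK (n := N + 2 * (n * n) + 2)
  refine ⟨ρ⁻¹ / (100 * 4 ^ n * (1 + T)) ^ (N + 2 * (n * n) + 2), _, by positivity,
    (div_le_self (by positivity) hpow).trans (inv_le_one_of_one_le₀ (by linarith)),
    fun p hp => ⟨hn, hρ, by positivity, le_rfl, ?_⟩⟩
  rw [mul_div_left_comm]
  refine mul_le_of_le_one_right (by positivity) (div_le_one_of_le₀ ?_ (by positivity))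
  gcongr

lemma exists_forall_scale {L κ : ℝ} (hL : 1 ≤ L) (hpos : 0 < κ) (hle : κ ≤ 1) :
    ∃ δ > 0, ∀ ε, 0 < ε → ε < δ → ∀ Λ, 0 < Λ → Scale L ε Λ κ := by
  refine ⟨κ ^ 2 / (4 * L ^ 2), by positivity, fun ε hε hεδ Λ hΛ =>
    ⟨hL, hε, hΛ, hpos.le, hle, ?_⟩⟩
  rw [lt_div_iff₀ (by positivity)] at hεδ
  linarith

/-- main inductive step.  With `T = n2 + 2^{2 n1}` and `ρ ≥ 2` there
is `ε* > 0` such that for all `ε ∈ (0,ε*)`, `λ > 0` and `1 ≤ m ≤ n2`: every elastic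
collision system `S` of `2 n1 + m` unit discs in `ℝ²` satisfying the `(ε,ρ)` initial
conditions at `t0`, with `|DS(t0)| = λ` and `|D a_m(t0) - λ w0| ≤ λ ε`, undergoes at
least `m - 1 + n1 (n1 + 1)` collisions in `[t0, t0 + ε λ⁻¹ T)` and satisfies the
`(ε (1+2T), ρ (1+3T))` initial conditions at time `t0 + ε λ⁻¹ T`. -/
theorem inductive_step (n1 n2 : ℕ) (hn1 : 0 < n1) (hn2 : 0 < n2)
    (ρ : ℝ) (hρ : 2 ≤ ρ) :
    ∃ εstar : ℝ, 0 < εstar ∧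
      ∀ ε : ℝ, 0 < ε → ε < εstar → ∀ lam : ℝ, 0 < lam →
      ∀ m : ℕ, ∀ hm : 0 < m, m ≤ n2 →
      ∀ S : BallSystem (BBIndex m n1) 2 Set.univ, ∀ t0 : ℝ,
        InitCond m n1 hm hn1 S ε ρ t0 →
        S.speedNorm t0 = lam →
        ‖S.vr (Sum.inl (⟨m - 1, by omega⟩ : Fin m)) t0 - lam • w0‖ ≤ lam * ε →
        (∃ F : Finset (ℝ × Finset (BBIndex m n1)),
          ↑F ⊆ {p ∈ S.collisions |
              p.1 ∈ Set.Ico t0 (t0 + ε * lam⁻¹ * ((n2 : ℝ) + 2 ^ (2 * n1)))} ∧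
          m - 1 + n1 * (n1 + 1) ≤ F.card) ∧
        InitCond m n1 hm hn1 S (ε * (1 + 2 * ((n2 : ℝ) + 2 ^ (2 * n1))))
          (ρ * (1 + 3 * ((n2 : ℝ) + 2 ^ (2 * n1))))
          (t0 + ε * lam⁻¹ * ((n2 : ℝ) + 2 ^ (2 * n1))) := by
  have : NeZero n1 := ⟨hn1.ne'⟩
  have hpow : (2 : ℝ) ^ (2 * n1) = 4 ^ n1 := by rw [pow_mul]; norm_num
  rw [hpow]
  set T : ℝ := n2 + 4 ^ n1
  have hT : 0 ≤ T := by positivity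
  obtain ⟨κ, K, hκ, hκ₁, htolerance⟩ := exists_forall_tolerance hn1 hρ hT n2
  obtain ⟨δ, hδ, hscale⟩ :=
    exists_forall_scale (L := n1 + n2 + 3 + T) (by
      linarith [n1.cast_nonneg (α := ℝ), n2.cast_nonneg (α := ℝ)]) hκ hκ₁
  refine ⟨δ, hδ, fun ε hε hεδ lam hlam m hm hmn S t0 hinit hspeed hfast => ?_⟩
  obtain ⟨p, rfl⟩ := Nat.exists_eq_succ_of_ne_zero hm.ne'
  have hp : (p : ℝ) + 1 ≤ n2 := mod_cast hmn
  have hlast : ‖S.vr (disc .train p) t0 - lam • - -w0‖ ≤ lam * ε := by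
    rwa [disc_train p.lt_succ_self, neg_neg]
  obtain ⟨⟨F, hF, hcard⟩, hfinal⟩ := (BallSystem.prepared_of_initCond hinit).step
    (hscale ε hε hεδ lam hlam) (htolerance p (by omega)) hspeed hlast (by linarith) (by linarith)
  obtain ⟨G, hG, hGF⟩ := BallSystem.exists_finset_collisions (div_pos hε hlam) hF
  rw [show t0 + ε * lam⁻¹ * T = t0 + T * (ε / lam) by ring]
  exact ⟨⟨G, hG, (hGF.trans hcard).ge⟩, hfinal.initCond⟩
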